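/- arXiv:2105.07006 — 5 statements merged into one kernel-verified Lean document; each statement's English description precedes it below -/
import Mathlib

section
/- Let I = (G_S, G_R, d_R, d_S, c_S) be a VNEP instance whose substrate G_S is a bidirectional tree rooted at p. Let Ĩ = (G̃_S, G_R, d_R, d̃_S, c̃_S) be obtained from I as follows: for every node v of G_S that has at least one child, add a fresh node v′ together with the edges (v, v′) and (v′, v), and set d̃_S(v) := 0, d̃_S(v′) := d_S(v), c̃_S(v′) := c_S(v), d̃_S(v, v′) := d̃_S(v′, v) := ∞ and c̃_S(v, v′) := c̃_S(v′, v) := 0; all other capacities and costs are unchanged. Then every node of G̃_S of degree at least two has capacity 0, and for every k ∈ ℝ≥0: I has a feasible mapping of cost at most k if and only if Ĩ has a feasible mapping of cost at most k. -/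
open scoped BigOperators NNReal ENNReal Classical

/-- A rooted tree on vertex set `V`: a root together with a parent function such that the
root is its own parent and every vertex reaches the root by iterating the parent function.
The associated bidirectional tree substrate has the directed edges `(u, v)` and `(v, u)`
for every non-root `u` with parent `v`. -/
structure RTree (V : Type*) where
  root : V
  parent : V → V
  parent_root : parent root = root
  reaches_root : ∀ v : V, ∃ n : ℕ, parent^[n] v = root

namespace RTree

variable {V : Type*}

/-- `u` is a child of `v`. -/
def IsChild (T : RTree V) (u v : V) : Prop := u ≠ v ∧ T.parent u = v

/-- `w` lies in the subtree `T_v` rooted at `v` (i.e. `w` is `v` or a descendant of `v`). -/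
def InSubtree (T : RTree V) (v w : V) : Prop := ∃ n : ℕ, T.parent^[n] w = v

/-- The directed edge set of the bidirectional tree substrate associated to a rooted tree:
both orientations of every parent-child pair. -/
noncomputable def edges [Fintype V] [DecidableEq V] (T : RTree V) : Finset (V × V) :=
  Finset.univ.filter fun e => e.1 ≠ e.2 ∧ (T.parent e.1 = e.2 ∨ T.parent e.2 = e.1)

end RTree

/-- A VNEP instance: a substrate digraph `(VS, ES)` with `τ`-dimensional node and edge
capacities (`dSv`, `dSe`, valued in `[0, ∞]`) and costs (`cSv`, `cSe`), and a request
digraph `(VR, ER)` with `τ`-dimensional node and edge demands (`dRv`, `dRe`). -/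
structure VNEP (VS VR : Type*) (τ : ℕ) where
  ES : Finset (VS × VS)
  ER : Finset (VR × VR)
  dSv : VS → Fin τ → ℝ≥0∞
  dSe : VS × VS → Fin τ → ℝ≥0∞
  cSv : VS → Fin τ → ℝ≥0
  cSe : VS × VS → Fin τ → ℝ≥0
  dRv : VR → Fin τ → ℝ≥0
  dRe : VR × VR → Fin τ → ℝ≥0

/-- The list of directed edges traversed by a path given as a list of vertices. -/
def pathEdges {α : Type*} (p : List α) : List (α × α) := p.zip p.tail

/-- A simple directed path from `a` to `b` with respect to the edge relation `E`, given as
its (nonempty, duplicate-free) list of vertices; a single-vertex list is a path of length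
zero. -/
def IsDiPath {α : Type*} (E : α → α → Prop) (a b : α) (p : List α) : Prop :=
  p.head? = some a ∧ p.getLast? = some b ∧ List.Chain' E p ∧ p.Nodup

/-- A mapping of a request into a substrate: `mV` maps request nodes to substrate nodes and
`mE` assigns to each request edge a list of substrate vertices (its intended path). -/
structure Mapping (VS VR : Type*) where
  mV : VR → VS
  mE : VR × VR → List VS

section VNEPDefs

variable {VS VR : Type*} {τ : ℕ}

/-- A mapping is valid if every request edge is mapped to a simple directed path in the
substrate between the images of its endpoints. -/
def Mapping.Valid (I : VNEP VS VR τ) (M : Mapping VS VR) : Prop :=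
  ∀ e ∈ I.ER, IsDiPath (fun a b => (a, b) ∈ I.ES) (M.mV e.1) (M.mV e.2) (M.mE e)

/-- A mapping is feasible if it is valid and all node and edge capacities are respected by
the cumulative demands mapped onto them. -/
noncomputable def Mapping.Feasible [Fintype VR] [DecidableEq VS] (I : VNEP VS VR τ)
    (M : Mapping VS VR) : Prop :=
  M.Valid I ∧
  (∀ v : VS, ∀ t : Fin τ,
    ((∑ w ∈ Finset.univ.filter (fun w => M.mV w = v), I.dRv w t : ℝ≥0) : ℝ≥0∞) ≤ I.dSv v t) ∧
  (∀ eS ∈ I.ES, ∀ t : Fin τ,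
    ((∑ eR ∈ I.ER.filter (fun eR => eS ∈ pathEdges (M.mE eR)), I.dRe eR t : ℝ≥0) : ℝ≥0∞) ≤
      I.dSe eS t)

/-- The cost of a mapping: `∑_w ⟨d_R(w), c_S(m_V(w))⟩ + ∑_{e ∈ E_R} ∑_{e' ∈ m_E(e)}
⟨d_R(e), c_S(e')⟩`. -/
noncomputable def Mapping.cost [Fintype VR] [DecidableEq VS] (I : VNEP VS VR τ)
    (M : Mapping VS VR) : ℝ≥0 :=
  (∑ w : VR, ∑ t, I.dRv w t * I.cSv (M.mV w) t) +
    ∑ e ∈ I.ER, ∑ e' ∈ (pathEdges (M.mE e)).toFinset, ∑ t, I.dRe e t * I.cSe e' t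

end VNEPDefs

theorem pathEdges_cons_cons {α : Type*} (a b : α) (l : List α) :
    pathEdges (a :: b :: l) = (a, b) :: pathEdges (b :: l) := rfl

theorem pathEdges_rel {α : Type*} {E : α → α → Prop} :
    ∀ (p : List α), List.Chain' E p → ∀ x y, (x, y) ∈ pathEdges p → E x y
  | [], _, x, y, h => by simp [pathEdges] at h
  | [a], _, x, y, h => by simp [pathEdges] at h
  | a :: b :: l, hc, x, y, h => by
    have hc' : E a b ∧ List.IsChain E (b :: l) := List.isChain_cons_cons.1 hc
    rw [pathEdges_cons_cons] at h
    rcases List.mem_cons.1 h with h | h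
    · cases h; exact hc'.1
    · exact pathEdges_rel (b :: l) hc'.2 x y h

theorem pathEdges_concat {α : Type*} (y b : α) : ∀ (q : List α), q.getLast? = some b →
    ∀ e, e ∈ pathEdges (q ++ [y]) ↔ e ∈ pathEdges q ∨ e = (b, y)
  | [], h, e => by simp at h
  | [a], h, e => by
    have : a = b := by simpa using h
    subst this
    simp [pathEdges]
  | a :: c :: l, h, e => by
    have h' : (c :: l).getLast? = some b := by simpa [List.getLast?_cons_cons] using h
    have := pathEdges_concat y b (c :: l) h' e
    simp only [List.cons_append] at this ⊢
    rw [pathEdges_cons_cons, pathEdges_cons_cons, List.mem_cons, List.mem_cons, this]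
    tauto

theorem pathEdges_map {α β : Type*} (f : α → β) (p : List α) :
    pathEdges (p.map f) = (pathEdges p).map (Prod.map f f) := by
  unfold pathEdges
  rw [← List.map_tail, List.zip_map]

theorem IsDiPath.cons' {α : Type*} {E : α → α → Prop} {a b y : α} {q : List α}
    (h : IsDiPath E a b q) (hy : E y a) (hn : y ∉ q) :
    IsDiPath E y b (y :: q) ∧ pathEdges (y :: q) = (y, a) :: pathEdges q := by
  obtain ⟨h1, h2, h3, h4⟩ := h
  cases q with
  | nil => simp at h1
  | cons c l =>
    have : c = a := by simpa using h1
    subst this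
    refine ⟨⟨rfl, ?_, List.isChain_cons_cons.2 ⟨hy, h3⟩, List.nodup_cons.2 ⟨hn, h4⟩⟩, rfl⟩
    simpa [List.getLast?_cons_cons] using h2

theorem IsDiPath.concat' {α : Type*} {E : α → α → Prop} {a b y : α} {q : List α}
    (h : IsDiPath E a b q) (hy : E b y) (hn : y ∉ q) :
    IsDiPath E a y (q ++ [y]) := by
  obtain ⟨h1, h2, h3, h4⟩ := h
  refine ⟨?_, by simp, ?_, ?_⟩
  · cases q with
    | nil => simp at h1
    | cons c l => simpa using h1
  · refine List.isChain_append.2 ⟨h3, by simp, ?_⟩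
    intro x hx z hz
    rw [h2] at hx
    simp at hx hz
    subst hx; subst hz; exact hy
  · rw [← List.concat_eq_append]
    exact h4.concat hn

theorem IsDiPath.eq_singleton {α : Type*} {E : α → α → Prop} {a : α} {q : List α}
    (h : IsDiPath E a a q) : q = [a] := by
  obtain ⟨h1, h2, h3, h4⟩ := h
  cases q with
  | nil => simp at h1
  | cons c l =>
    have : c = a := by simpa using h1
    subst this
    cases l with
    | nil => rfl
    | cons d l =>
      exfalso
      rw [List.getLast?_cons_cons] at h2
      exact (List.nodup_cons.1 h4).1 (List.mem_of_getLast? h2)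

/-- Edge relation of the extended graph. -/
structure ExtRel {V : Type*} {P : V → Prop} (E : V → V → Prop)
    (E' : V ⊕ {v : V // P v} → V ⊕ {v : V // P v} → Prop) : Prop where
  ll : ∀ x y, E' (Sum.inl x) (Sum.inl y) ↔ E x y
  lr : ∀ x v, E' (Sum.inl x) (Sum.inr v) ↔ x = v.1
  rl : ∀ v x, E' (Sum.inr v) (Sum.inl x) ↔ x = v.1
  rr : ∀ v w, ¬ E' (Sum.inr v) (Sum.inr w)

/-- Projection of the extended vertex set. -/
def projS {V : Type*} {P : V → Prop} : V ⊕ {v : V // P v} → V := Sum.elim id Subtype.val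

/-- Lift to the extended vertex set. -/
noncomputable def liftS {V : Type*} {P : V → Prop} (v : V) : V ⊕ {v : V // P v} :=
  if h : P v then Sum.inr ⟨v, h⟩ else Sum.inl v

theorem projS_liftS {V : Type*} {P : V → Prop} (v : V) :
    projS (liftS v : V ⊕ {v : V // P v}) = v := by
  unfold liftS; split_ifs <;> rfl

theorem path_lift {V : Type*} {P : V → Prop} {E : V → V → Prop}
    {E' : V ⊕ {v : V // P v} → V ⊕ {v : V // P v} → Prop} (hE : ExtRel E E')
    (a b : V) (p : List V) (h : IsDiPath E a b p) :
    ∃ q, IsDiPath E' (liftS a) (liftS b) q ∧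
      ∀ x y, (Sum.inl x, Sum.inl y) ∈ pathEdges q ↔ (x, y) ∈ pathEdges p := by
  by_cases hab : a = b
  · subst hab
    rw [h.eq_singleton]
    refine ⟨[liftS a], ⟨rfl, rfl, List.isChain_singleton _, by simp⟩, by simp [pathEdges]⟩
  have h0 : IsDiPath E' (Sum.inl a) (Sum.inl b) (p.map Sum.inl) := by
    obtain ⟨h1, h2, h3, h4⟩ := h
    refine ⟨by simp [h1], by simp [h2], ?_, h4.map Sum.inl_injective⟩
    exact List.isChain_map_of_isChain _ (fun x y hxy => (hE.ll x y).2 hxy) h3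
  have e0 : ∀ x y, ((Sum.inl x, Sum.inl y) : (V ⊕ {v : V // P v}) × _) ∈
      pathEdges (p.map Sum.inl) ↔ (x, y) ∈ pathEdges p := by
    intro x y
    rw [pathEdges_map]
    simp
  -- append
  obtain ⟨q, hq, eq, nq⟩ : ∃ q, IsDiPath E' (Sum.inl a) (liftS b) q ∧
      (∀ x y, (Sum.inl x, Sum.inl y) ∈ pathEdges q ↔ (x, y) ∈ pathEdges p) ∧
      ∀ v, Sum.inr v ∈ q → v.1 = b := by
    by_cases hb : P b
    · refine ⟨p.map Sum.inl ++ [Sum.inr ⟨b, hb⟩], ?_, ?_, ?_⟩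
      · rw [liftS, dif_pos hb]
        exact h0.concat' ((hE.lr _ _).2 rfl) (by simp)
      · intro x y
        rw [pathEdges_concat _ _ _ h0.2.1, e0]
        simp
      · intro v hv
        simp at hv
        rw [hv]
    · refine ⟨p.map Sum.inl, ?_, e0, by simp⟩
      rw [liftS, dif_neg hb]
      exact h0
  by_cases ha : P a
  · have := hq.cons' (y := Sum.inr ⟨a, ha⟩) ((hE.rl _ _).2 rfl) (fun hm => hab (nq _ hm))
    refine ⟨Sum.inr ⟨a, ha⟩ :: q, ?_, ?_⟩
    · rw [liftS, dif_pos ha]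
      exact this.1
    · intro x y
      rw [this.2, ← eq]
      simp
  · refine ⟨q, ?_, eq⟩
    rw [liftS, dif_neg ha]
    exact hq

theorem path_proj {V : Type*} {P : V → Prop} {E : V → V → Prop}
    {E' : V ⊕ {v : V // P v} → V ⊕ {v : V // P v} → Prop} (hE : ExtRel E E') (b) :
    ∀ (q : List (V ⊕ {v : V // P v})) (a), IsDiPath E' a b q →
    ∃ p, IsDiPath E (projS a) (projS b) p ∧
      (∀ x y, (Sum.inl x, Sum.inl y) ∈ pathEdges q ↔ (x, y) ∈ pathEdges p) ∧
      (∀ x ∈ p, Sum.inl x ∈ q ∨ ∃ v, v.1 = x ∧ q = [Sum.inr v])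
  | [], a, h => by simp [IsDiPath] at h
  | [c], a, h => by
    obtain ⟨h1, h2, -, -⟩ := h
    have : c = a := by simpa using h1
    subst this
    have : c = b := by simpa using h2
    subst this
    refine ⟨[projS c], ⟨rfl, rfl, List.isChain_singleton _, by simp⟩, by simp [pathEdges], ?_⟩
    rcases c with c | c <;> simp [projS]
  | a' :: c :: l, a, h => by
    obtain ⟨h1, h2, h3, h4⟩ := h
    have : a' = a := by simpa using h1
    subst this
    obtain ⟨h5, h6⟩ := List.isChain_cons_cons.1 h3
    obtain ⟨h7, h8⟩ := List.nodup_cons.1 h4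
    rw [List.getLast?_cons_cons] at h2
    have hq' : IsDiPath E' c b (c :: l) := ⟨rfl, h2, h6, h8⟩
    obtain ⟨p, hp, ep, np⟩ := path_proj hE b (c :: l) c hq'
    rcases a' with v | v <;> rcases c with w | w
    · have hx := hp.cons' (y := v) ((hE.ll _ _).1 h5) (by
        intro hv
        rcases np v hv with h | ⟨_, _, h⟩
        · exact h7 h
        · simp at h)
      refine ⟨v :: p, hx.1, ?_, ?_⟩
      · intro x y
        rw [hx.2, pathEdges_cons_cons, List.mem_cons, List.mem_cons, ep]
        simp [projS]
      · intro x hx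
        rcases List.mem_cons.1 hx with rfl | hx
        · simp
        · rcases np x hx with h | ⟨_, _, h⟩
          · left; exact List.mem_cons_of_mem _ h
          · simp at h
    · have hvw := (hE.lr _ _).1 h5
      subst hvw
      have hl : l = [] := by
        cases l with
        | nil => rfl
        | cons d l =>
          exfalso
          have := (List.isChain_cons_cons.1 h6).1
          rcases d with d | d
          · have := (hE.rl _ _).1 this
            subst this
            simp at h7
          · exact hE.rr _ _ this
      subst hl
      have hb : b = Sum.inr w := by simpa using h2.symm
      subst hb
      refine ⟨[w.1], ⟨rfl, rfl, List.isChain_singleton _, by simp⟩, by simp [pathEdges], by simp⟩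
    · have hvw := (hE.rl _ _).1 h5
      subst hvw
      refine ⟨p, hp, ?_, ?_⟩
      · intro x y
        rw [pathEdges_cons_cons, List.mem_cons, ep]
        simp
      · intro x hx
        rcases np x hx with h | ⟨_, _, h⟩
        · left; exact List.mem_cons_of_mem _ h
        · simp at h
    · exact absurd h5 (hE.rr _ _)

/-- Lemma 3.1 of the paper (pushing capacities to leaves): let `I` be a VNEP instance whose
substrate is the bidirectional tree given by the rooted tree `T`, and let `Ĩ` (`It`) be the
instance obtained by adding, for every node `v` having at least one child, a fresh leaf `v′`
(modelled as `Sum.inr ⟨v, _⟩`) with both directed edges between `v` and `v′`, moving the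
capacity of `v` to `v′` (setting the capacity of `v` to `0`), giving `v′` the cost of `v`,
giving the new edges capacity `∞` and cost `0`, and leaving all other data unchanged.
Then every node of the new substrate of degree at least two has capacity `0`, and for every
`k`, `I` has a feasible mapping of cost at most `k` iff `Ĩ` does. -/
theorem leaf_transformation_correct {VS VR : Type*} [Fintype VS] [DecidableEq VS]
    [Fintype VR] [DecidableEq VR] {τ : ℕ} (T : RTree VS) (I : VNEP VS VR τ)
    (hES : I.ES = T.edges)
    (It : VNEP (VS ⊕ {v : VS // ∃ u, T.IsChild u v}) VR τ)
    (hES' : It.ES =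
      I.ES.image (fun e => (Sum.inl e.1, Sum.inl e.2)) ∪
      Finset.univ.image (fun v' : {v : VS // ∃ u, T.IsChild u v} =>
        ((Sum.inl v'.1, Sum.inr v') : _ × _)) ∪
      Finset.univ.image (fun v' : {v : VS // ∃ u, T.IsChild u v} =>
        ((Sum.inr v', Sum.inl v'.1) : _ × _)))
    (hER : It.ER = I.ER) (hdRv : It.dRv = I.dRv) (hdRe : It.dRe = I.dRe)
    (hdSv : It.dSv =
      Sum.elim (fun v => if ∃ u, T.IsChild u v then 0 else I.dSv v) (fun v' => I.dSv v'.1))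
    (hcSv : It.cSv = Sum.elim I.cSv (fun v' => I.cSv v'.1))
    (hdSeOld : ∀ x y : VS, It.dSe (Sum.inl x, Sum.inl y) = I.dSe (x, y))
    (hcSeOld : ∀ x y : VS, It.cSe (Sum.inl x, Sum.inl y) = I.cSe (x, y))
    (hdSeNew : ∀ v' : {v : VS // ∃ u, T.IsChild u v},
      It.dSe (Sum.inl v'.1, Sum.inr v') = ⊤ ∧ It.dSe (Sum.inr v', Sum.inl v'.1) = ⊤)
    (hcSeNew : ∀ v' : {v : VS // ∃ u, T.IsChild u v},
      It.cSe (Sum.inl v'.1, Sum.inr v') = 0 ∧ It.cSe (Sum.inr v', Sum.inl v'.1) = 0) :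
    (∀ x : VS ⊕ {v : VS // ∃ u, T.IsChild u v},
      2 ≤ (Finset.univ.filter (fun y => (x, y) ∈ It.ES ∨ (y, x) ∈ It.ES)).card →
        It.dSv x = 0) ∧
    (∀ k : ℝ≥0,
      (∃ M : Mapping VS VR, M.Feasible I ∧ M.cost I ≤ k) ↔
      (∃ M' : Mapping (VS ⊕ {v : VS // ∃ u, T.IsChild u v}) VR,
        M'.Feasible It ∧ M'.cost It ≤ k)) := by
  have hE : ExtRel (fun a b => (a, b) ∈ I.ES) (fun a b => (a, b) ∈ It.ES) := by
    constructor
    · intro x y; simp [hES']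
    · intro x v; simp [hES', eq_comm]
    · intro v x; simp [hES', eq_comm]
    · intro v w; simp [hES']
  refine ⟨?_, ?_⟩
  · rintro (x | x) hx
    · rw [hdSv]
      by_cases hc : ∃ u, T.IsChild u x
      · simp [hc]
      · exfalso
        obtain ⟨y, hy, z, hz, hyz⟩ := Finset.one_lt_card.1 hx
        have key : ∀ y, ((Sum.inl x, y) ∈ It.ES ∨ (y, Sum.inl x) ∈ It.ES) →
            y = Sum.inl (T.parent x) := by
          rintro (y | y) hy
          · have hy : (x, y) ∈ I.ES ∨ (y, x) ∈ I.ES := by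
              rcases hy with hy | hy
              · left; exact (hE.ll _ _).1 hy
              · right; exact (hE.ll _ _).1 hy
            have hne : y ≠ x → T.parent y ≠ x := fun h1 h2 => hc ⟨y, h1, h2⟩
            simp only [hES, RTree.edges, Finset.mem_filter] at hy
            congr 1
            grind
          · exfalso
            rcases hy with hy | hy
            · have := (hE.lr _ _).1 hy
              exact hc (this ▸ y.2)
            · have := (hE.rl _ _).1 hy
              exact hc (this ▸ y.2)
        simp only [Finset.mem_filter] at hy hz
        exact hyz ((key y hy.2).trans (key z hz.2).symm)
    · exfalso
      obtain ⟨y, hy, z, hz, hyz⟩ := Finset.one_lt_card.1 hx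
      have key : ∀ y, ((Sum.inr x, y) ∈ It.ES ∨ (y, Sum.inr x) ∈ It.ES) →
          y = Sum.inl x.1 := by
        rintro (y | y) hy
        · rcases hy with hy | hy
          · rw [(hE.rl _ _).1 hy]
          · rw [(hE.lr _ _).1 hy]
        · rcases hy with hy | hy <;> exact absurd hy (hE.rr _ _)
      simp only [Finset.mem_filter] at hy hz
      exact hyz ((key y hy.2).trans (key z hz.2).symm)
  -- shared facts
  have hcost : ∀ (M : Mapping VS VR) (M' : Mapping (VS ⊕ {v : VS // ∃ u, T.IsChild u v}) VR),
      (∀ w, M.mV w = projS (M'.mV w)) → M'.Valid It →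
      (∀ e ∈ I.ER, ∀ x y, (Sum.inl x, Sum.inl y) ∈ pathEdges (M'.mE e) ↔
        (x, y) ∈ pathEdges (M.mE e)) → M'.cost It = M.cost I := by
    intro M M' hV hval hc
    unfold Mapping.cost
    rw [hER, hdRv, hdRe, hcSv]
    congr 1
    · refine Finset.sum_congr rfl fun w _ => Finset.sum_congr rfl fun t _ => ?_
      rw [hV]
      rcases M'.mV w with v | v <;> rfl
    · refine Finset.sum_congr rfl fun e he => ?_
      symm
      have hinj : Function.Injective (Prod.map Sum.inl Sum.inl :
          VS × VS → (VS ⊕ {v : VS // ∃ u, T.IsChild u v}) × (VS ⊕ {v : VS // ∃ u, T.IsChild u v})) :=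
        Sum.inl_injective.prodMap Sum.inl_injective
      have h1 : ∑ e' ∈ (pathEdges (M.mE e)).toFinset, ∑ t, I.dRe e t * I.cSe e' t =
          ∑ e' ∈ (pathEdges (M.mE e)).toFinset.map ⟨_, hinj⟩, ∑ t, I.dRe e t * It.cSe e' t := by
        rw [Finset.sum_map]
        refine Finset.sum_congr rfl fun e' _ => ?_
        obtain ⟨x, y⟩ := e'
        simp [hcSeOld]
      rw [h1]
      apply Finset.sum_subset
      · intro z hz
        simp only [Finset.mem_map, List.mem_toFinset] at hz ⊢
        obtain ⟨⟨x, y⟩, hxy, rfl⟩ := hz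
        exact (hc e he x y).2 hxy
      · rintro ⟨z1, z2⟩ hz hz'
        rw [List.mem_toFinset] at hz
        have hrel := pathEdges_rel _ (hval e (hER ▸ he)).2.2.1 _ _ hz
        rcases z1 with x | v <;> rcases z2 with y | w
        · exfalso
          apply hz'
          simp only [Finset.mem_map, List.mem_toFinset]
          exact ⟨(x, y), (hc e he x y).1 hz, rfl⟩
        · have := (hE.lr _ _).1 hrel
          subst this
          simp [(hcSeNew w).1]
        · have := (hE.rl _ _).1 hrel
          subst this
          simp [(hcSeNew v).2]
        · exact absurd hrel (hE.rr _ _)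
  have hfilt : ∀ (M : Mapping VS VR) (M' : Mapping (VS ⊕ {v : VS // ∃ u, T.IsChild u v}) VR),
      (∀ e ∈ I.ER, ∀ x y, (Sum.inl x, Sum.inl y) ∈ pathEdges (M'.mE e) ↔
        (x, y) ∈ pathEdges (M.mE e)) → ∀ x y t,
      (∑ eR ∈ It.ER.filter (fun eR => (Sum.inl x, Sum.inl y) ∈ pathEdges (M'.mE eR)), It.dRe eR t)
      = ∑ eR ∈ I.ER.filter (fun eR => (x, y) ∈ pathEdges (M.mE eR)), I.dRe eR t := by
    intro M M' hc x y t
    rw [hER, hdRe]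
    refine Finset.sum_congr ?_ fun _ _ => rfl
    ext e
    simp only [Finset.mem_filter]
    exact and_congr_right fun he => hc e he x y
  intro k
  constructor
  · rintro ⟨M, ⟨hval, hnode, hedge⟩, hk⟩
    have hex : ∀ e, ∃ q, e ∈ I.ER →
        IsDiPath (fun a b => (a, b) ∈ It.ES) (liftS (M.mV e.1)) (liftS (M.mV e.2)) q ∧
        ∀ x y, (Sum.inl x, Sum.inl y) ∈ pathEdges q ↔ (x, y) ∈ pathEdges (M.mE e) := by
      intro e
      by_cases he : e ∈ I.ER
      · obtain ⟨q, hq⟩ := path_lift hE _ _ _ (hval e he)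
        exact ⟨q, fun _ => hq⟩
      · exact ⟨[], fun h => absurd h he⟩
    choose q hq using hex
    let M' : Mapping (VS ⊕ {v : VS // ∃ u, T.IsChild u v}) VR := ⟨fun w => liftS (M.mV w), q⟩
    have hval' : M'.Valid It := fun e he => (hq e (hER ▸ he)).1
    have hc : ∀ e ∈ I.ER, ∀ x y, (Sum.inl x, Sum.inl y) ∈ pathEdges (M'.mE e) ↔
        (x, y) ∈ pathEdges (M.mE e) := fun e he => (hq e he).2
    refine ⟨M', ⟨hval', ?_, ?_⟩, ?_⟩
    · intro v t
      have hle : ∀ v : VS ⊕ {v : VS // ∃ u, T.IsChild u v},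
          ((∑ w ∈ Finset.univ.filter (fun w => M'.mV w = v), It.dRv w t : ℝ≥0) : ℝ≥0∞)
            ≤ I.dSv (projS v) t := by
        intro v
        refine le_trans ?_ (hnode (projS v) t)
        rw [hdRv]
        refine ENNReal.coe_le_coe.2 (Finset.sum_le_sum_of_subset ?_)
        intro w hw
        simp only [Finset.mem_filter, Finset.mem_univ, true_and] at hw ⊢
        rw [← hw]
        exact (projS_liftS _).symm
      rcases v with v | v
      · by_cases hv : ∃ u, T.IsChild u v
        · have : Finset.univ.filter (fun w => M'.mV w = Sum.inl v) = ∅ := by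
            refine Finset.filter_eq_empty_iff.2 ?_
            intro w _ hw
            have h2 : M.mV w = v := by
              have := congrArg projS hw
              simpa [M', projS_liftS, projS] using (projS_liftS (M.mV w)).symm.trans this
            have hw : (liftS (M.mV w) : VS ⊕ {v : VS // ∃ u, T.IsChild u v}) = Sum.inl v := hw
            rw [h2, liftS, dif_pos hv] at hw
            simp at hw
          rw [this]
          simp
        · have := hle (Sum.inl v)
          rw [hdSv]
          simpa [hv, projS] using this
      · have := hle (Sum.inr v)
        rw [hdSv]
        simpa [projS] using this
    · rintro ⟨z1, z2⟩ hz t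
      rcases z1 with x | v <;> rcases z2 with y | w
      · have h := hedge (x, y) ((hE.ll _ _).1 hz) t
        rw [hdSeOld]
        refine le_of_eq_of_le (congrArg _ ?_) h
        convert hfilt M M' hc x y t
      · have := (hE.lr _ _).1 hz
        subst this
        rw [(hdSeNew w).1]
        simp
      · have := (hE.rl _ _).1 hz
        subst this
        rw [(hdSeNew v).2]
        simp
      · exact absurd hz (hE.rr _ _)
    · rw [hcost M M' (fun w => (projS_liftS _).symm) hval' hc]
      exact hk
  · rintro ⟨M', ⟨hval, hnode, hedge⟩, hk⟩
    have hex : ∀ e, ∃ p, e ∈ I.ER →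
        IsDiPath (fun a b => (a, b) ∈ I.ES) (projS (M'.mV e.1)) (projS (M'.mV e.2)) p ∧
        ∀ x y, (Sum.inl x, Sum.inl y) ∈ pathEdges (M'.mE e) ↔ (x, y) ∈ pathEdges p := by
      intro e
      by_cases he : e ∈ I.ER
      · obtain ⟨p, hp, hp', -⟩ := path_proj hE _ _ _ (hval e (hER ▸ he))
        exact ⟨p, fun _ => ⟨hp, hp'⟩⟩
      · exact ⟨[], fun h => absurd h he⟩
    choose p hp using hex
    let M : Mapping VS VR := ⟨fun w => projS (M'.mV w), p⟩
    have hc : ∀ e ∈ I.ER, ∀ x y, (Sum.inl x, Sum.inl y) ∈ pathEdges (M'.mE e) ↔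
        (x, y) ∈ pathEdges (M.mE e) := fun e he => (hp e he).2
    refine ⟨M, ⟨fun e he => (hp e he).1, ?_, ?_⟩, ?_⟩
    · intro v t
      have hl := hnode (Sum.inl v) t
      rw [hdSv, hdRv] at hl
      by_cases hv : ∃ u, T.IsChild u v
      · have hr := hnode (Sum.inr ⟨v, hv⟩) t
        rw [hdSv, hdRv] at hr
        have hle : (∑ w ∈ Finset.univ.filter (fun w => M.mV w = v), I.dRv w t) ≤
            (∑ w ∈ Finset.univ.filter (fun w => M'.mV w = Sum.inl v), I.dRv w t) +
            ∑ w ∈ Finset.univ.filter (fun w => M'.mV w = Sum.inr ⟨v, hv⟩), I.dRv w t := by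
          rw [← Finset.sum_union]
          · refine Finset.sum_le_sum_of_subset ?_
            intro w hw
            simp only [Finset.mem_filter, Finset.mem_univ, true_and, Finset.mem_union] at hw ⊢
            have hw : projS (M'.mV w) = v := hw
            rcases hx : M'.mV w with x | x <;> rw [hx] at hw
            · left; rw [← hw]; rfl
            · right; congr 1; exact Subtype.ext hw
          · rw [Finset.disjoint_filter]
            intro w _ h1 h2
            rw [h1] at h2
            simp at h2
        refine (ENNReal.coe_le_coe.2 hle).trans ?_
        rw [ENNReal.coe_add]
        refine (add_le_add hl hr).trans ?_
        simp [hv]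
      · simp only [Sum.elim_inl, if_neg hv] at hl
        refine le_trans (ENNReal.coe_le_coe.2 (Finset.sum_le_sum_of_subset ?_)) hl
        intro w hw
        simp only [Finset.mem_filter, Finset.mem_univ, true_and] at hw ⊢
        have hw : projS (M'.mV w) = v := hw
        rcases hx : M'.mV w with x | x <;> rw [hx] at hw
        · rw [← hw]; rfl
        · exact absurd (hw ▸ x.2) hv
    · rintro ⟨x, y⟩ hz t
      have := hedge (Sum.inl x, Sum.inl y) ((hE.ll _ _).2 hz) t
      rw [hdSeOld] at this
      refine le_of_eq_of_le (congrArg _ ?_) this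
      symm
      convert hfilt M M' hc x y t
    · rw [← hcost M M' (fun w => rfl) hval hc]
      exact hk
end

section
/- Let I = (G_S, G_R, d_R, d_S, c_S) be a VNEP instance whose substrate G_S is a bidirectional tree rooted at p, and let v ∈ V_S be a node with children u_1, …, u_t where t > 2. Let Ĩ be obtained from I by the single split step: add two fresh nodes v_ℓ and v_r with d̃_S(v_ℓ) = d̃_S(v_r) = 0 and c̃_S(v_ℓ) = c̃_S(v_r) = 0; with s = ⌊t/2⌋, replace each pair of edges (v, u_i), (u_i, v) for i ≤ s by (v_ℓ, u_i), (u_i, v_ℓ) and for i > s by (v_r, u_i), (u_i, v_r), keeping their capacities and costs; add the edges (v, v_ℓ), (v_ℓ, v), (v, v_r), (v_r, v), each of capacity ∞ and cost 0; all other data is unchanged. Then the substrate of Ĩ is again a bidirectional tree, and for every k ∈ ℝ≥0: I has a feasible mapping of cost at most k if and only if Ĩ has a feasible mapping of cost at most k. (Iterating this step turns any tree substrate into a binary tree substrate of an equivalent instance.) -/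
open scoped BigOperators NNReal ENNReal Classical

/-- The directed edge set (both orientations of every parent-child pair) induced by a
parent function. -/
noncomputable def edgesOf {V : Type*} [Fintype V] [DecidableEq V] (par : V → V) :
    Finset (V × V) :=
  Finset.univ.filter fun e => e.1 ≠ e.2 ∧ (par e.1 = e.2 ∨ par e.2 = e.1)

/-- The parent function after the split step at `v` with children `u 0, …, u (t-1)`: the two
fresh nodes `v_ℓ = Sum.inr false` and `v_r = Sum.inr true` become children of `v`; the first
`⌊t/2⌋` children of `v` become children of `v_ℓ` and the remaining ones children of `v_r`;
everything else is unchanged. -/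
noncomputable def splitParent {VS : Type*} (T : RTree VS) (v : VS) {t : ℕ}
    (u : Fin t → VS) : VS ⊕ Bool → VS ⊕ Bool
  | Sum.inl w =>
      if ∃ i : Fin t, (i : ℕ) < t / 2 ∧ u i = w then Sum.inr false
      else if ∃ i : Fin t, t / 2 ≤ (i : ℕ) ∧ u i = w then Sum.inr true
      else Sum.inl (T.parent w)
  | Sum.inr _ => Sum.inl v

theorem aux_mem_filter {α : Type*} {p : α → Prop} {inst : DecidablePred p} {s : Finset α} {a : α} :
    a ∈ @Finset.filter α p inst s ↔ a ∈ s ∧ p a := Finset.mem_filter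

theorem aux_chain_iff {α : Type*} {E : α → α → Prop} (p : List α) :
    List.IsChain E p ↔ ∀ e ∈ pathEdges p, E e.1 e.2 := by
  induction p with
  | nil => simp [pathEdges]
  | cons a p ih =>
    cases p with
    | nil => simp [pathEdges]
    | cons b q =>
      rw [List.isChain_cons_cons, ih]
      simp [pathEdges]

theorem aux_walk {α : Type*} (p : List α) : ∀ (a b : α), p.head? = some a →
    p.getLast? = some b → Relation.ReflTransGen (fun x y => (x, y) ∈ pathEdges p) a b := by
  induction p with
  | nil => simp
  | cons c p ih =>
    intro a b ha hb
    simp only [List.head?_cons, Option.some.injEq] at ha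
    subst ha
    cases p with
    | nil =>
      simp at hb
      subst hb
      exact Relation.ReflTransGen.refl
    | cons d q =>
      have h1 := ih d b (by simp) (by simpa [List.getLast?_cons_cons] using hb)
      refine Relation.ReflTransGen.head (b := d) (by simp [pathEdges]) (Relation.ReflTransGen.mono ?_ _ _ h1)
      intro x y hxy
      simp only [pathEdges, List.tail_cons, List.zip_cons_cons, List.mem_cons] at hxy ⊢
      exact Or.inr hxy

theorem aux_exists_path {α : Type*} {E : α → α → Prop} {a b : α}
    (h : Relation.ReflTransGen E a b) : ∃ p, IsDiPath E a b p := by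
  induction h using Relation.ReflTransGen.head_induction_on with
  | refl => exact ⟨[b], rfl, rfl, List.isChain_singleton b, by simp⟩
  | head hac hcb ih =>
    rename_i x y
    obtain ⟨p, h1, h2, h3, h4⟩ := ih
    change List.IsChain E p at h3
    by_cases hx : x ∈ p
    · obtain ⟨s, q, rfl⟩ := List.append_of_mem hx
      refine ⟨x :: q, by simp, ?_, ?_, ?_⟩
      · rw [← h2, List.getLast?_append_of_ne_nil _ (by simp)]
      · exact (List.isChain_append.1 h3).2.1
      · exact (List.nodup_append.1 h4).2.1
    · refine ⟨x :: p, by simp, ?_, ?_, List.nodup_cons.2 ⟨hx, h4⟩⟩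
      · cases p with
        | nil => simp at h1
        | cons d q => simpa [List.getLast?_cons_cons] using h2
      · change List.IsChain E (x :: p)
        cases p with
        | nil => simp at h1
        | cons d q =>
          simp at h1
          subst h1
          exact List.isChain_cons_cons.2 ⟨hac, h3⟩

/-- Contract the two fresh nodes to `v`. -/
def auxF {VS : Type*} (v : VS) : VS ⊕ Bool → VS := Sum.elim id (fun _ => v)

/-- The new edges. -/
def auxNew {VS : Type*} (v : VS) (e : (VS ⊕ Bool) × (VS ⊕ Bool)) : Prop :=
  ∃ s : Bool, e = (Sum.inl v, Sum.inr s) ∨ e = (Sum.inr s, Sum.inl v)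

/-- Lift of an old edge. -/
noncomputable def auxG {VS : Type*} (T : RTree VS) (v : VS) {t : ℕ}
    (u : Fin t → VS) (e : VS × VS) : (VS ⊕ Bool) × (VS ⊕ Bool) :=
  if e.1 = v ∧ T.IsChild e.2 v then (splitParent T v u (Sum.inl e.2), Sum.inl e.2)
  else if e.2 = v ∧ T.IsChild e.1 v then (Sum.inl e.1, splitParent T v u (Sum.inl e.1))
  else (Sum.inl e.1, Sum.inl e.2)

theorem aux_par_child {VS : Type*} (T : RTree VS) (v : VS) {t : ℕ} (u : Fin t → VS) 
    (huc : ∀ w : VS, T.IsChild w v ↔ ∃ i : Fin t, u i = w) (w : VS) (hw : T.IsChild w v) :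
    ∃ s, splitParent T v u (Sum.inl w) = Sum.inr s := by
  obtain ⟨i, rfl⟩ := (huc w).1 hw
  unfold splitParent
  dsimp only
  split_ifs with h1 h2
  · exact ⟨_, rfl⟩
  · exact ⟨_, rfl⟩
  · exact absurd ⟨i, not_lt.1 fun h => h1 ⟨i, h, rfl⟩, rfl⟩ h2

theorem aux_par_other {VS : Type*} (T : RTree VS) (v : VS) {t : ℕ} (u : Fin t → VS) 
    (huc : ∀ w : VS, T.IsChild w v ↔ ∃ i : Fin t, u i = w) (w : VS) (hw : ¬ T.IsChild w v) :
    splitParent T v u (Sum.inl w) = Sum.inl (T.parent w) := by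
  rw [huc] at hw
  unfold splitParent
  dsimp only
  split_ifs with h1 h2
  · obtain ⟨i, -, h⟩ := h1; exact absurd ⟨i, h⟩ hw
  · obtain ⟨i, -, h⟩ := h2; exact absurd ⟨i, h⟩ hw
  · rfl

theorem aux_FG {VS : Type*} (T : RTree VS) (v : VS) {t : ℕ} (u : Fin t → VS) 
    (huc : ∀ w : VS, T.IsChild w v ↔ ∃ i : Fin t, u i = w) (e : VS × VS) :
    (auxF v (auxG T v u e).1, auxF v (auxG T v u e).2) = e := by
  obtain ⟨a, b⟩ := e
  unfold auxG
  dsimp only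
  split_ifs with h1 h2
  · obtain ⟨s, hs⟩ := aux_par_child T v u huc b h1.2
    simp [hs, auxF, h1.1]
  · obtain ⟨s, hs⟩ := aux_par_child T v u huc a h2.2
    simp [hs, auxF, h2.1]
  · simp [auxF]

theorem aux_lift {VS : Type*} (T : RTree VS) (v : VS) {t : ℕ} (u : Fin t → VS) 
    (huc : ∀ w : VS, T.IsChild w v ↔ ∃ i : Fin t, u i = w) (a b : VS) 
    (E : VS ⊕ Bool → VS ⊕ Bool → Prop) (hE : ∀ x y, auxNew v (x, y) → E x y)
    (hG : E (auxG T v u (a, b)).1 (auxG T v u (a, b)).2) :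
    Relation.ReflTransGen E (Sum.inl a) (Sum.inl b) := by
  unfold auxG at hG
  dsimp only at hG
  split_ifs at hG with h1 h2
  · obtain ⟨s, hs⟩ := aux_par_child T v u huc b h1.2
    rw [hs] at hG
    refine Relation.ReflTransGen.head (hE _ (Sum.inr s) ?_) (Relation.ReflTransGen.single hG)
    exact ⟨s, Or.inl (by rw [h1.1])⟩
  · obtain ⟨s, hs⟩ := aux_par_child T v u huc a h2.2
    rw [hs] at hG
    refine Relation.ReflTransGen.head hG (Relation.ReflTransGen.single (hE _ _ ?_))
    exact ⟨s, Or.inr (by rw [h2.1])⟩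
  · exact Relation.ReflTransGen.single hG

theorem aux_G_mem {VS : Type*} [Fintype VS] [DecidableEq VS] (T : RTree VS) (v : VS) {t : ℕ}
    (u : Fin t → VS) 
    (huc : ∀ w : VS, T.IsChild w v ↔ ∃ i : Fin t, u i = w) (e : VS × VS) (he : e ∈ T.edges) :
    auxG T v u e ∈ edgesOf (splitParent T v u) := by
  obtain ⟨a, b⟩ := e
  simp only [RTree.edges, Finset.mem_filter, Finset.mem_univ, true_and] at he
  simp only [edgesOf, Finset.mem_filter, Finset.mem_univ, true_and]
  unfold auxG
  dsimp only
  split_ifs with h1 h2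
  · obtain ⟨s, hs⟩ := aux_par_child T v u huc b h1.2
    simp [hs]
  · obtain ⟨s, hs⟩ := aux_par_child T v u huc a h2.2
    simp [hs]
  · refine ⟨by simpa using he.1, ?_⟩
    rcases he.2 with h | h
    · left
      rw [aux_par_other T v u huc, h]
      rintro ⟨h3, h4⟩
      exact h2 ⟨h.symm.trans h4, h3, h4⟩
    · right
      rw [aux_par_other T v u huc, h]
      rintro ⟨h3, h4⟩
      exact h1 ⟨h.symm.trans h4, h3, h4⟩

theorem aux_classify {VS : Type*} [Fintype VS] [DecidableEq VS] (T : RTree VS) (v : VS) {t : ℕ}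
    (u : Fin t → VS) 
    (huc : ∀ w : VS, T.IsChild w v ↔ ∃ i : Fin t, u i = w) (e : (VS ⊕ Bool) × (VS ⊕ Bool))
    (he : e ∈ edgesOf (splitParent T v u)) :
    auxNew v e ∨ ∃ e' ∈ T.edges, auxG T v u e' = e := by
  have key : ∀ x : VS ⊕ Bool, x ≠ splitParent T v u x →
      (auxNew v (x, splitParent T v u x) ∧ auxNew v (splitParent T v u x, x)) ∨
      ((∃ e' ∈ T.edges, auxG T v u e' = (x, splitParent T v u x)) ∧
       (∃ e' ∈ T.edges, auxG T v u e' = (splitParent T v u x, x))) := by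
    rintro (x | s) hx
    · right
      by_cases hc : T.IsChild x v
      · refine ⟨⟨(x, v), ?_, ?_⟩, ⟨(v, x), ?_, ?_⟩⟩
        · simp [RTree.edges, hc.1, hc.2]
        · simp [auxG, hc, hc.1]
        · simp [RTree.edges, hc.1.symm, hc.2]
        · simp [auxG, hc]
      · rw [aux_par_other T v u huc x hc] at hx ⊢
        have hx' : x ≠ T.parent x := fun h => hx (by rw [← h])
        have h1 : ¬ (x = v ∧ T.IsChild (T.parent x) v) := by
          rintro ⟨rfl, h2, h3⟩
          have h4 : ∀ n, T.parent^[n] x = x ∨ T.parent^[n] x = T.parent x := by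
            intro n
            induction n with
            | zero => simp
            | succ n ih =>
              rw [Function.iterate_succ_apply']
              rcases ih with h | h <;> rw [h]
              · right; rfl
              · left; exact h3
          obtain ⟨n, hn⟩ := T.reaches_root x
          have h5 := T.parent_root
          rcases h4 n with h | h
          · rw [← hn, h] at h5
            exact hx' h5.symm
          · rw [← hn, h, h3] at h5
            exact hx' h5
        refine ⟨⟨(x, T.parent x), ?_, ?_⟩, ⟨(T.parent x, x), ?_, ?_⟩⟩
        · simp [RTree.edges, hx']
        · unfold auxG; dsimp only
          rw [if_neg h1, if_neg (fun h => hc h.2)]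
        · simp [RTree.edges, hx'.symm]
        · unfold auxG; dsimp only
          rw [if_neg (fun h => hc h.2), if_neg h1]
    · left
      exact ⟨⟨s, Or.inr rfl⟩, ⟨s, Or.inl rfl⟩⟩
  obtain ⟨a, b⟩ := e
  simp only [edgesOf, Finset.mem_filter, Finset.mem_univ, true_and] at he
  obtain ⟨h0, rfl | rfl⟩ := he
  · exact (key a h0).imp And.left And.left
  · exact (key b h0.symm).imp And.right And.right

theorem aux_tree {VS : Type*} (T : RTree VS) (v : VS) {t : ℕ} (u : Fin t → VS) 
    (huc : ∀ w : VS, T.IsChild w v ↔ ∃ i : Fin t, u i = w) :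
    splitParent T v u (Sum.inl T.root) = Sum.inl T.root ∧
      ∀ x : VS ⊕ Bool, ∃ n : ℕ, (splitParent T v u)^[n] x = Sum.inl T.root := by
  have hr : ∀ n x, T.parent^[n] x = T.root →
      ∃ m : ℕ, (splitParent T v u)^[m] (Sum.inl x) = Sum.inl T.root := by
    intro n
    induction n with
    | zero => intro x hx; exact ⟨0, congrArg Sum.inl hx⟩
    | succ n ih =>
      intro x hx
      obtain ⟨m, hm⟩ := ih (T.parent x) hx
      by_cases hc : T.IsChild x v
      · obtain ⟨s, hs⟩ := aux_par_child T v u huc x hc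
        refine ⟨m + 2, ?_⟩
        rw [Function.iterate_succ_apply, Function.iterate_succ_apply, hs]
        rw [hc.2] at hm
        exact hm
      · refine ⟨m + 1, ?_⟩
        rw [Function.iterate_succ_apply, aux_par_other T v u huc x hc, hm]
  refine ⟨?_, ?_⟩
  · rw [aux_par_other T v u huc, T.parent_root]
    rintro ⟨h1, h2⟩
    exact h1 (T.parent_root.symm.trans h2)
  · rintro (x | s)
    · obtain ⟨n, hn⟩ := T.reaches_root x
      exact hr n x hn
    · obtain ⟨n, hn⟩ := T.reaches_root v
      obtain ⟨m, hm⟩ := hr n v hn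
      exact ⟨m + 1, hm⟩

/-- Lemma 3.2 of the paper (single split step): let `I` be a VNEP instance whose substrate
is the bidirectional tree given by `T`, let `v` be a node with children `u 0, …, u (t-1)`
for some `t > 2`, and let `Ĩ` (`It`) be the instance on `VS ⊕ Bool` obtained by the split
step: the fresh nodes `v_ℓ`, `v_r` get capacity `0` and cost `0`; the edges between the
children of `v` and their new parents keep their capacities and costs; the four new edges
between `v` and `v_ℓ`, `v_r` get capacity `∞` and cost `0`; all other data is unchanged.
Then the new substrate is again a (bidirectional) rooted tree, and for every `k`, `I` has a
feasible mapping of cost at most `k` iff `Ĩ` does. -/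
theorem split_step_correct {VS VR : Type*} [Fintype VS] [DecidableEq VS]
    [Fintype VR] [DecidableEq VR] {τ : ℕ} (T : RTree VS) (I : VNEP VS VR τ)
    (hES : I.ES = T.edges) (v : VS) (t : ℕ) (ht : 2 < t) (u : Fin t → VS)
    (hu : Function.Injective u) (huc : ∀ w : VS, T.IsChild w v ↔ ∃ i : Fin t, u i = w)
    (It : VNEP (VS ⊕ Bool) VR τ)
    (hES' : It.ES = edgesOf (splitParent T v u))
    (hER : It.ER = I.ER) (hdRv : It.dRv = I.dRv) (hdRe : It.dRe = I.dRe)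
    (hdSv : It.dSv = Sum.elim I.dSv (fun _ => 0))
    (hcSv : It.cSv = Sum.elim I.cSv (fun _ => 0))
    (hdSeOld : ∀ x y : VS, It.dSe (Sum.inl x, Sum.inl y) = I.dSe (x, y))
    (hcSeOld : ∀ x y : VS, It.cSe (Sum.inl x, Sum.inl y) = I.cSe (x, y))
    (hdSeChild : ∀ (s : Bool) (i : Fin t),
      It.dSe (Sum.inr s, Sum.inl (u i)) = I.dSe (v, u i) ∧
      It.dSe (Sum.inl (u i), Sum.inr s) = I.dSe (u i, v))
    (hcSeChild : ∀ (s : Bool) (i : Fin t),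
      It.cSe (Sum.inr s, Sum.inl (u i)) = I.cSe (v, u i) ∧
      It.cSe (Sum.inl (u i), Sum.inr s) = I.cSe (u i, v))
    (hdSeNew : ∀ s : Bool,
      It.dSe (Sum.inl v, Sum.inr s) = ⊤ ∧ It.dSe (Sum.inr s, Sum.inl v) = ⊤)
    (hcSeNew : ∀ s : Bool,
      It.cSe (Sum.inl v, Sum.inr s) = 0 ∧ It.cSe (Sum.inr s, Sum.inl v) = 0) :
    (splitParent T v u (Sum.inl T.root) = Sum.inl T.root ∧
      ∀ x : VS ⊕ Bool, ∃ n : ℕ, (splitParent T v u)^[n] x = Sum.inl T.root) ∧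
    (∀ k : ℝ≥0,
      (∃ M : Mapping VS VR, M.Feasible I ∧ M.cost I ≤ k) ↔
      (∃ M' : Mapping (VS ⊕ Bool) VR, M'.Feasible It ∧ M'.cost It ≤ k)) := by
  refine ⟨aux_tree T v u huc, ?_⟩
  have hFG := aux_FG T v u huc
  have hGinj : Function.Injective (auxG T v u) := by
    intro a b hab
    rw [← hFG a, ← hFG b, hab]
  have hGd : ∀ e, It.dSe (auxG T v u e) = I.dSe e ∧ It.cSe (auxG T v u e) = I.cSe e := by
    rintro ⟨a, b⟩
    unfold auxG
    dsimp only
    split_ifs with h1 h2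
    · obtain ⟨s, hs⟩ := aux_par_child T v u huc b h1.2
      obtain ⟨i, rfl⟩ := (huc b).1 h1.2
      rw [hs, h1.1]
      exact ⟨(hdSeChild s i).1, (hcSeChild s i).1⟩
    · obtain ⟨s, hs⟩ := aux_par_child T v u huc a h2.2
      obtain ⟨i, rfl⟩ := (huc a).1 h2.2
      rw [hs, h2.1]
      exact ⟨(hdSeChild s i).2, (hcSeChild s i).2⟩
    · exact ⟨hdSeOld a b, hcSeOld a b⟩
  have hNd : ∀ e, auxNew v e → It.dSe e = ⊤ ∧ It.cSe e = 0 := by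
    rintro e ⟨s, rfl | rfl⟩
    · exact ⟨(hdSeNew s).1, (hcSeNew s).1⟩
    · exact ⟨(hdSeNew s).2, (hcSeNew s).2⟩
  have hNF : ∀ e, auxNew v e → auxF v e.1 = v ∧ auxF v e.2 = v := by
    rintro e ⟨s, rfl | rfl⟩ <;> simp [auxF]
  have hNG : ∀ e ∈ I.ES, ¬ auxNew v (auxG T v u e) := by
    intro e he hn
    have h1 := hNF _ hn
    have h2 := hFG e
    rw [h1.1, h1.2] at h2
    rw [hES, ← h2] at he
    simp [RTree.edges] at he
  have hGm : ∀ e ∈ I.ES, auxG T v u e ∈ It.ES := by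
    intro e he
    rw [hES']
    exact aux_G_mem T v u huc e (hES ▸ he)
  have hNm : ∀ e, auxNew v e → e ∈ It.ES := by
    rintro e ⟨s, rfl | rfl⟩ <;> rw [hES'] <;>
      exact aux_mem_filter.2 ⟨Finset.mem_univ _, by simp [splitParent]⟩
  have hcl : ∀ e ∈ It.ES, auxNew v e ∨ ∃ e' ∈ I.ES, auxG T v u e' = e := by
    intro e he
    rw [hES'] at he
    rw [hES]
    exact aux_classify T v u huc e he
  intro k
  constructor
  · rintro ⟨M, ⟨hv, hn, hc⟩, hk⟩
    have hp : ∀ e : VR × VR, ∃ p : List (VS ⊕ Bool), e ∈ I.ER →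
        IsDiPath (fun x y => auxNew v (x, y) ∨
          ∃ e' ∈ pathEdges (M.mE e), auxG T v u e' = (x, y))
          (Sum.inl (M.mV e.1)) (Sum.inl (M.mV e.2)) p := by
      intro e
      by_cases he : e ∈ I.ER
      · obtain ⟨h1, h2, h3, h4⟩ := hv e he
        have hw := aux_walk _ _ _ h1 h2
        have hw' := aux_exists_path (E := fun x y => auxNew v (x, y) ∨
          ∃ e' ∈ pathEdges (M.mE e), auxG T v u e' = (x, y))
          (a := Sum.inl (M.mV e.1)) (b := Sum.inl (M.mV e.2)) (by
            refine hw.lift' Sum.inl ?_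
            intro a b hab
            refine aux_lift T v u huc a b _ (fun x y h => Or.inl h) (Or.inr ⟨_, hab, rfl⟩))
        obtain ⟨p, hp⟩ := hw'
        exact ⟨p, fun _ => hp⟩
      · exact ⟨[], fun h => absurd h he⟩
    choose P hP using hp
    have hPe : ∀ e ∈ I.ER, ∀ e' ∈ pathEdges (P e), auxNew v e' ∨
        ∃ e'' ∈ pathEdges (M.mE e), auxG T v u e'' = e' := fun e he e' he' =>
      (aux_chain_iff _).1 (hP e he).2.2.1 e' he'
    have hMe : ∀ e ∈ I.ER, ∀ e' ∈ pathEdges (M.mE e), e' ∈ I.ES := fun e he e' he' =>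
      (aux_chain_iff _).1 (hv e he).2.2.1 e' he'
    refine ⟨⟨fun w => Sum.inl (M.mV w), P⟩, ⟨?_, ?_, ?_⟩, le_trans ?_ hk⟩
    · intro e he
      rw [hER] at he
      obtain ⟨h1, h2, h3, h4⟩ := hP e he
      refine ⟨h1, h2, (aux_chain_iff _).2 ?_, h4⟩
      intro e' he'
      rcases hPe e he e' he' with h | ⟨e'', h, rfl⟩
      · exact hNm _ h
      · exact hGm _ (hMe e he _ h)
    · rintro (x | s) t'
      · simpa [hdRv, hdSv] using hn x t'
      · simp
    · intro eS heS t'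
      rcases hcl eS heS with h | ⟨e', he', rfl⟩
      · rw [(hNd _ h).1]; exact le_top
      · rw [(hGd e').1]
        refine le_trans ?_ (hc e' he' t')
        rw [hdRe, hER]
        refine ENNReal.coe_le_coe.2 (Finset.sum_le_sum_of_subset ?_)
        intro e he
        replace he := aux_mem_filter.1 he
        refine aux_mem_filter.2 ⟨he.1, ?_⟩
        rcases hPe e he.1 _ he.2 with h | ⟨e'', h, h2⟩
        · exact absurd h (hNG e' he')
        · exact hGinj h2 ▸ h
    · unfold Mapping.cost
      rw [hdRv, hdRe, hER, hcSv]
      refine add_le_add (le_of_eq rfl) (Finset.sum_le_sum ?_)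
      intro e he
      calc _ ≤ ∑ e' ∈ ((pathEdges (M.mE e)).toFinset.image (auxG T v u)),
              ∑ t, I.dRe e t * It.cSe e' t := by
            refine Finset.sum_le_sum_of_ne_zero ?_
            intro e' he' hne
            rw [List.mem_toFinset] at he'
            rcases hPe e he e' he' with h | ⟨e'', h, h2⟩
            · exact absurd (by simp [(hNd e' h).2]) hne
            · exact Finset.mem_image.2 ⟨e'', List.mem_toFinset.2 h, h2⟩
        _ = _ := by
            rw [Finset.sum_image (fun a _ b _ h => hGinj h)]
            refine Finset.sum_congr rfl fun e' _ => ?_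
            rw [(hGd e').2]
  · rintro ⟨M, ⟨hv, hn, hc⟩, hk⟩
    have hMe : ∀ e ∈ I.ER, ∀ e' ∈ pathEdges (M.mE e), e' ∈ It.ES := fun e he e' he' =>
      (aux_chain_iff _).1 (hv e (hER ▸ he)).2.2.1 e' he'
    have hp : ∀ e : VR × VR, ∃ p : List VS, e ∈ I.ER →
        IsDiPath (fun x y => (x, y) ∈ I.ES ∧ auxG T v u (x, y) ∈ pathEdges (M.mE e))
          (auxF v (M.mV e.1)) (auxF v (M.mV e.2)) p := by
      intro e
      by_cases he : e ∈ I.ER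
      · obtain ⟨h1, h2, h3, h4⟩ := hv e (hER ▸ he)
        have hw := aux_walk _ _ _ h1 h2
        have hw' := aux_exists_path
          (E := fun x y => (x, y) ∈ I.ES ∧ auxG T v u (x, y) ∈ pathEdges (M.mE e))
          (a := auxF v (M.mV e.1)) (b := auxF v (M.mV e.2)) (by
            refine hw.lift' (auxF v) ?_
            intro a b hab
            rcases hcl _ (hMe e he _ hab) with h | ⟨e', he', h⟩
            · have h5 := hNF _ h
              dsimp only at h5
              rw [Function.onFun, h5.1, h5.2]
            · have h5 := hFG e'
              rw [h] at h5
              dsimp only at h5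
              refine Relation.ReflTransGen.single ?_
              rw [h5, h]
              exact ⟨he', hab⟩)
        obtain ⟨p, hp⟩ := hw'
        exact ⟨p, fun _ => hp⟩
      · exact ⟨[], fun h => absurd h he⟩
    choose P hP using hp
    have hPe : ∀ e ∈ I.ER, ∀ e' ∈ pathEdges (P e), e' ∈ I.ES ∧
        auxG T v u e' ∈ pathEdges (M.mE e) := fun e he e' he' =>
      (aux_chain_iff _).1 (hP e he).2.2.1 e' he'
    have hz : ∀ w s, M.mV w = Sum.inr s → ∀ t', I.dRv w t' = 0 := by
      intro w s hw t'
      have h1 := hn (Sum.inr s) t'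
      rw [hdSv, hdRv] at h1
      simp only [Sum.elim_inr, Pi.zero_apply, nonpos_iff_eq_zero, ENNReal.coe_eq_zero,
        Finset.sum_eq_zero_iff] at h1
      exact h1 w (by simpa using hw)
    refine ⟨⟨fun w => auxF v (M.mV w), P⟩, ⟨?_, ?_, ?_⟩, le_trans ?_ hk⟩
    · intro e he
      obtain ⟨h1, h2, h3, h4⟩ := hP e he
      exact ⟨h1, h2, (aux_chain_iff _).2 fun e' he' => (hPe e he e' he').1, h4⟩
    · intro x t'
      have h1 := hn (Sum.inl x) t'
      rw [hdSv, hdRv] at h1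
      refine le_trans (ENNReal.coe_le_coe.2 (Finset.sum_le_sum_of_ne_zero ?_)) h1
      intro w hw hne
      rw [Finset.mem_filter] at hw ⊢
      refine ⟨hw.1, ?_⟩
      rcases hw' : M.mV w with y | s
      · have h2 := hw.2
        simp only [hw', auxF, Sum.elim_inl, id] at h2
        rw [h2]
      · exact absurd (hz w s hw' t') hne
    · intro eS heS t'
      have h1 := hc _ (hGm eS heS) t'
      rw [(hGd eS).1, hdRe, hER] at h1
      refine le_trans (ENNReal.coe_le_coe.2 (Finset.sum_le_sum_of_subset ?_)) h1
      intro e he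
      replace he := aux_mem_filter.1 he
      exact aux_mem_filter.2 ⟨he.1, (hPe e he.1 _ he.2).2⟩
    · unfold Mapping.cost
      rw [hdRv, hdRe, hER, hcSv]
      refine add_le_add (Finset.sum_le_sum ?_) (Finset.sum_le_sum ?_)
      · intro w _
        refine Finset.sum_le_sum fun t' _ => ?_
        rcases hw' : M.mV w with y | s
        · simp [auxF, hw']
        · simp [hz w s hw' t']
      intro e he
      calc _ = ∑ e' ∈ ((pathEdges (P e)).toFinset.image (auxG T v u)),
              ∑ t, I.dRe e t * It.cSe e' t := by
            rw [Finset.sum_image (fun a _ b _ h => hGinj h)]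
            refine Finset.sum_congr rfl fun e' _ => ?_
            rw [(hGd e').2]
        _ ≤ _ := by
            refine Finset.sum_le_sum_of_subset ?_
            intro e' he'
            obtain ⟨e'', h, rfl⟩ := Finset.mem_image.1 he'
            exact List.mem_toFinset.2 (hPe e he _ (List.mem_toFinset.1 h)).2
end

section
/- In the DP setting with children a and b of a non-leaf node v: let A, B ⊆ V_R be disjoint and X = A ∪ B. Suppose (m^a_V, m^a_E) is a desirable mapping of G_R[A] into T_a and (m^b_V, m^b_E) is a desirable mapping of G_R[B] into T_b, and suppose Σ_{e ∈ cut(A)} d_R(e) ≤ d_S(a, v), Σ_{e ∈ cut⁻(A)} d_R(e) ≤ d_S(v, a), Σ_{e ∈ cut(B)} d_R(e) ≤ d_S(b, v) and Σ_{e ∈ cut⁻(B)} d_R(e) ≤ d_S(v, b). Then the combined mapping of G_R[X] into T_v — with m_V agreeing with m^a_V on A and with m^b_V on B, with m_E agreeing with m^a_E on edges inside A and with m^b_E on edges inside B, and mapping each request edge between A and B to the unique directed path in T_v between the images of its endpoints (which passes through v) — is a desirable mapping of G_R[X] into T_v, and its induced cost equals the sum of the induced costs of (m^a_V, m^a_E)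 and (m^b_V, m^b_E) plus Σ_{e ∈ cut⁻(A)} ⟨d_R(e), c_S(v, a)⟩ + Σ_{e ∈ cut(A)} ⟨d_R(e), c_S(a, v)⟩ + Σ_{e ∈ cut⁻(B)} ⟨d_R(e), c_S(v, b)⟩ + Σ_{e ∈ cut(B)} ⟨d_R(e), c_S(b, v)⟩. -/
open scoped BigOperators NNReal ENNReal Classical

section DPDefs

variable {VS VR : Type*} {τ : ℕ}

/-- The set of children of `v` in the rooted tree `T`. -/
noncomputable def childrenOf [Fintype VS] (T : RTree VS) (v : VS) : Finset VS :=
  Finset.univ.filter fun w => T.IsChild w v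

/-- `cut(A)`: the request edges leaving `A`. -/
noncomputable def cutP (I : VNEP VS VR τ) (A : Finset VR) : Finset (VR × VR) :=
  I.ER.filter fun e => e.1 ∈ A ∧ e.2 ∉ A

/-- `cut⁻(A)`: the request edges entering `A`. -/
noncomputable def cutN (I : VNEP VS VR τ) (A : Finset VR) : Finset (VR × VR) :=
  I.ER.filter fun e => e.1 ∉ A ∧ e.2 ∈ A

/-- `E(G_R[X])`: the request edges with both endpoints in `X`. -/
noncomputable def ERin (I : VNEP VS VR τ) (X : Finset VR) : Finset (VR × VR) :=
  I.ER.filter fun e => e.1 ∈ X ∧ e.2 ∈ X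

/-- The auxiliary function `f(v, x, R)` of the dynamic program. -/
noncomputable def fDP (I : VNEP VS VR τ) (D : Finset VR → VS → ℝ≥0∞) (v x : VS)
    (R : Finset VR) : ℝ≥0∞ :=
  if (∀ t, ((∑ e ∈ cutP I R, I.dRe e t : ℝ≥0) : ℝ≥0∞) ≤ I.dSe (x, v) t) ∧
      (∀ t, ((∑ e ∈ cutN I R, I.dRe e t : ℝ≥0) : ℝ≥0∞) ≤ I.dSe (v, x) t) then
    D R x + ((∑ e ∈ cutN I R, ∑ t, I.dRe e t * I.cSe (v, x) t : ℝ≥0) : ℝ≥0∞)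
          + ((∑ e ∈ cutP I R, ∑ t, I.dRe e t * I.cSe (x, v) t : ℝ≥0) : ℝ≥0∞)
  else ⊤

/-- `D` is the DP table: it satisfies the defining recurrence of the dynamic program
(leaf case and internal-node case). -/
def IsDPTable [Fintype VS] (I : VNEP VS VR τ) (T : RTree VS)
    (D : Finset VR → VS → ℝ≥0∞) : Prop :=
  (∀ v : VS, childrenOf T v = ∅ → ∀ R : Finset VR,
    D R v = if (∀ t, ((∑ w ∈ R, I.dRv w t : ℝ≥0) : ℝ≥0∞) ≤ I.dSv v t) then
      ((∑ w ∈ R, ∑ t, I.dRv w t * I.cSv v t : ℝ≥0) : ℝ≥0∞) else ⊤) ∧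
  (∀ v a b : VS, a ≠ b → childrenOf T v = {a, b} → ∀ R : Finset VR,
    D R v = ⨅ A ∈ R.powerset, fDP I D v a A + fDP I D v b (R \ A))

/-- The DP setting: the substrate is the bidirectional tree given by `T`, every node of `T`
is a leaf or has exactly two children, and every non-leaf node has capacity `0`. -/
def DPSetting [Fintype VS] [DecidableEq VS] (I : VNEP VS VR τ) (T : RTree VS) : Prop :=
  I.ES = T.edges ∧
  (∀ v : VS, childrenOf T v = ∅ ∨ ∃ a b : VS, a ≠ b ∧ childrenOf T v = {a, b}) ∧
  (∀ v : VS, childrenOf T v ≠ ∅ → I.dSv v = 0)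

/-- The substrate edge `eS` lies on the directed (upward) path in `T_v` from `w` to `v`. -/
def onUp (T : RTree VS) (v w : VS) (eS : VS × VS) : Prop :=
  ∃ i : ℕ, T.parent^[i] w = eS.1 ∧ T.parent eS.1 = eS.2 ∧ ∀ j ≤ i, T.parent^[j] w ≠ v

/-- The substrate edge `eS` lies on the directed (downward) path in `T_v` from `v` to `w`. -/
def onDown (T : RTree VS) (v w : VS) (eS : VS × VS) : Prop := onUp T v w (eS.2, eS.1)

/-- The edge set of the directed path in `T_v` from `w` up to `v`. -/
noncomputable def upEdges [Fintype VS] (T : RTree VS) (v w : VS) : Finset (VS × VS) :=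
  Finset.univ.filter fun eS => onUp T v w eS

/-- The edge set of the directed path in `T_v` from `v` down to `w`. -/
noncomputable def downEdges [Fintype VS] (T : RTree VS) (v w : VS) : Finset (VS × VS) :=
  Finset.univ.filter fun eS => onDown T v w eS

/-- `E^v_{eS}(X)`: the request edges of `cut(X)` whose source is mapped so that `eS` lies on
the upward path to `v`, together with the request edges of `cut⁻(X)` whose target is mapped
so that `eS` lies on the downward path from `v`. -/
noncomputable def EvSet (I : VNEP VS VR τ) (T : RTree VS) (v : VS) (X : Finset VR)
    (mV : VR → VS) (eS : VS × VS) : Finset (VR × VR) :=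
  (cutP I X).filter (fun e => onUp T v (mV e.1) eS) ∪
    (cutN I X).filter (fun e => onDown T v (mV e.2) eS)

/-- A desirable mapping of `G_R[X]` into `T_v`: a feasible mapping of the induced subrequest
into the subtree `T_v` such that every edge of `T_v` moreover has enough remaining capacity
for the cut edges routed through it towards/from `v`. -/
def Desirable (I : VNEP VS VR τ) (T : RTree VS) (v : VS) (X : Finset VR)
    (M : Mapping VS VR) : Prop :=
  (∀ w ∈ X, T.InSubtree v (M.mV w)) ∧
  (∀ e ∈ ERin I X, IsDiPath (fun a b => (a, b) ∈ I.ES) (M.mV e.1) (M.mV e.2) (M.mE e) ∧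
    ∀ x ∈ M.mE e, T.InSubtree v x) ∧
  (∀ s : VS, ∀ t : Fin τ,
    ((∑ w ∈ X.filter (fun w => M.mV w = s), I.dRv w t : ℝ≥0) : ℝ≥0∞) ≤ I.dSv s t) ∧
  (∀ eS ∈ I.ES, T.InSubtree v eS.1 → T.InSubtree v eS.2 → ∀ t : Fin τ,
    (((∑ eR ∈ (ERin I X).filter (fun eR => eS ∈ pathEdges (M.mE eR)), I.dRe eR t) +
        (∑ e ∈ EvSet I T v X M.mV eS, I.dRe e t) : ℝ≥0) : ℝ≥0∞) ≤ I.dSe eS t)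

/-- The induced cost of a mapping of `G_R[X]` into `T_v`: the cost of mapping the nodes of
`X` and the edges of `G_R[X]`, plus for each edge of `cut(X)` (resp. `cut⁻(X)`) the cost of
the path from the image of its source up to `v` (resp. from `v` down to the image of its
target). -/
noncomputable def inducedCost [Fintype VS] [DecidableEq VS] (I : VNEP VS VR τ)
    (T : RTree VS) (v : VS) (X : Finset VR) (M : Mapping VS VR) : ℝ≥0 :=
  (∑ w ∈ X, ∑ t, I.dRv w t * I.cSv (M.mV w) t) +
  (∑ e ∈ ERin I X, ∑ e' ∈ (pathEdges (M.mE e)).toFinset, ∑ t, I.dRe e t * I.cSe e' t) +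
  (∑ e ∈ cutP I X, ∑ e' ∈ upEdges T v (M.mV e.1), ∑ t, I.dRe e t * I.cSe e' t) +
  (∑ e ∈ cutN I X, ∑ e' ∈ downEdges T v (M.mV e.2), ∑ t, I.dRe e t * I.cSe e' t)

end DPDefs

section Combine

variable {VS VR : Type*}

/-- The number of steps needed to reach `v` from `w` by iterating the parent function
(`0` if `v` is not an ancestor of `w`). -/
noncomputable def stepsTo (T : RTree VS) (v w : VS) : ℕ :=
  if h : ∃ n : ℕ, T.parent^[n] w = v then Nat.find h else 0

/-- The vertex list of the directed path in `T_v` from `w` up to `v`. -/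
noncomputable def upList (T : RTree VS) (v w : VS) : List VS :=
  (List.range (stepsTo T v w + 1)).map fun i => T.parent^[i] w

/-- The vertex list of the directed path in `T_v` from `v` down to `w`. -/
noncomputable def downList (T : RTree VS) (v w : VS) : List VS := (upList T v w).reverse

/-- The combination of a mapping `Ma` of `G_R[A]` into `T_a` and a mapping `Mb` of `G_R[B]`
into `T_b`, for the two children `a`, `b` of `v`: nodes and edges inside `A` (resp. `B`) are
mapped as by `Ma` (resp. `Mb`), and each request edge between `A` and `B` is mapped to the
unique directed path in `T_v` between the images of its endpoints, which passes through
`v`. -/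
noncomputable def combineMapping (T : RTree VS) (v : VS) (A B : Finset VR)
    (Ma Mb : Mapping VS VR) : Mapping VS VR where
  mV := fun w => if w ∈ A then Ma.mV w else Mb.mV w
  mE := fun e =>
    if e.1 ∈ A ∧ e.2 ∈ A then Ma.mE e
    else if e.1 ∈ B ∧ e.2 ∈ B then Mb.mE e
    else if e.1 ∈ A ∧ e.2 ∈ B then
      upList T v (Ma.mV e.1) ++ (downList T v (Mb.mV e.2)).tail
    else if e.1 ∈ B ∧ e.2 ∈ A then
      upList T v (Mb.mV e.1) ++ (downList T v (Ma.mV e.2)).tail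
    else []

end Combine


section Helpers

variable {V : Type*}

theorem RTree.inSub_self (T : RTree V) (v : V) : T.InSubtree v v := ⟨0, rfl⟩

theorem RTree.inSub_of_parent (T : RTree V) {v w : V} (h : T.InSubtree v (T.parent w)) :
    T.InSubtree v w := by
  obtain ⟨n, hn⟩ := h
  exact ⟨n + 1, by simpa [Function.iterate_succ_apply] using hn⟩

theorem RTree.inSub_parent (T : RTree V) {v w : V} (h : T.InSubtree v w) (hne : w ≠ v) :
    T.InSubtree v (T.parent w) := by
  obtain ⟨n, hn⟩ := h
  cases n with
  | zero => exact absurd hn hne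
  | succ n => exact ⟨n, by simpa [Function.iterate_succ_apply] using hn⟩

theorem RTree.sub_induct (T : RTree V) {v : V} (P : V → Prop) (h0 : P v)
    (hs : ∀ w, w ≠ v → T.InSubtree v (T.parent w) → P (T.parent w) → P w) :
    ∀ w, T.InSubtree v w → P w := by
  rintro w ⟨n, hn⟩
  induction n generalizing w with
  | zero => simp only [Function.iterate_zero, id] at hn; exact hn ▸ h0
  | succ n ih =>
    rw [Function.iterate_succ_apply] at hn
    by_cases hw : w = v
    · exact hw ▸ h0
    · exact hs w hw ⟨n, hn⟩ (ih _ hn)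

theorem RTree.inSub_trans (T : RTree V) {u v w : V} (h : T.InSubtree u v)
    (h' : T.InSubtree v w) : T.InSubtree u w := by
  obtain ⟨n, hn⟩ := h
  obtain ⟨m, hm⟩ := h'
  exact ⟨n + m, by rw [Function.iterate_add_apply, hm, hn]⟩

theorem RTree.iter_root (T : RTree V) (n : ℕ) : T.parent^[n] T.root = T.root := by
  induction n with
  | zero => rfl
  | succ n ih => rw [Function.iterate_succ_apply, T.parent_root, ih]

theorem RTree.cyc (T : RTree V) {w : V} {n : ℕ} (h : T.parent^[n + 1] w = w) : w = T.root := by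
  obtain ⟨m, hm⟩ := T.reaches_root w
  have h1 : T.parent^[(n + 1) * m] w = w := by
    rw [Function.iterate_mul]
    exact Function.iterate_fixed h m
  have h2 : (n + 1) * m = n * m + m := by ring
  rw [h2, Function.iterate_add_apply, hm, T.iter_root] at h1
  exact h1.symm

theorem RTree.cyc' (T : RTree V) {w : V} (h : T.InSubtree w (T.parent w)) : w = T.root := by
  obtain ⟨n, hn⟩ := h
  exact T.cyc (n := n) (by simpa [Function.iterate_succ_apply] using hn)

/-- the parent of a child is not in the subtree of that child -/
theorem RTree.not_sub (T : RTree V) {a v : V} (h : T.IsChild a v) : ¬ T.InSubtree a v := by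
  intro hh
  obtain ⟨h1, h2⟩ := h
  rw [← h2] at hh
  have := T.cyc' hh
  apply h1
  rw [← h2, this, T.parent_root]

theorem RTree.child_sub (T : RTree V) {a v : V} (h : T.IsChild a v) : T.InSubtree v a :=
  ⟨1, h.2⟩

theorem RTree.sub_cases (T : RTree V) {v w : V} (h : T.InSubtree v w) :
    w = v ∨ ∃ c, T.IsChild c v ∧ T.InSubtree c w := by
  refine T.sub_induct (fun w => w = v ∨ ∃ c, T.IsChild c v ∧ T.InSubtree c w) (Or.inl rfl) ?_ w h
  rintro w hw - (h1 | ⟨c, hc, hcw⟩)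
  · exact Or.inr ⟨w, ⟨hw, h1⟩, T.inSub_self w⟩
  · exact Or.inr ⟨c, hc, T.inSub_of_parent hcw⟩

theorem RTree.sub_disj (T : RTree V) {a b v w : V} (ha : T.IsChild a v) (hb : T.IsChild b v)
    (hab : a ≠ b) (h : T.InSubtree a w) : ¬ T.InSubtree b w := by
  refine T.sub_induct (fun w => ¬ T.InSubtree b w) ?_ ?_ w h
  · intro hba
    have := T.inSub_parent hba hab
    rw [ha.2] at this
    exact T.not_sub hb this
  · intro w hw h1 h2 h3
    by_cases hwb : w = b
    · subst hwb
      rw [hb.2] at h1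
      exact T.not_sub ha h1
    · exact h2 (T.inSub_parent h3 hwb)

theorem stepsTo_self (T : RTree V) (v : V) : stepsTo T v v = 0 := by
  unfold stepsTo
  split_ifs with h
  · exact (Nat.find_eq_zero h).2 rfl
  · rfl

theorem stepsTo_succ (T : RTree V) {v w : V} (hw : w ≠ v) (h : T.InSubtree v (T.parent w)) :
    stepsTo T v w = stepsTo T v (T.parent w) + 1 := by
  have h' : ∃ n : ℕ, T.parent^[n] w = v := T.inSub_of_parent h
  have h'' : ∃ n : ℕ, T.parent^[n] (T.parent w) = v := h
  unfold stepsTo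
  rw [dif_pos h', dif_pos h'']
  exact Nat.find_comp_succ (p := fun n => T.parent^[n] w = v) h' h'' hw

theorem upList_self (T : RTree V) (v : V) : upList T v v = [v] := by
  simp [upList, stepsTo_self]

theorem upList_cons (T : RTree V) {v w : V} (hw : w ≠ v) (h : T.InSubtree v (T.parent w)) :
    upList T v w = w :: upList T v (T.parent w) := by
  unfold upList
  rw [stepsTo_succ T hw h, List.range_succ_eq_map]
  simp [Function.comp_def, Function.iterate_succ_apply]

theorem upList_head (T : RTree V) {v w : V} (h : T.InSubtree v w) :
    ∃ l, upList T v w = w :: l := by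
  by_cases hw : w = v
  · subst hw; exact ⟨[], upList_self T w⟩
  · exact ⟨_, upList_cons T hw (T.inSub_parent h hw)⟩

theorem upList_sub (T : RTree V) {v w : V} (h : T.InSubtree v w) :
    ∀ x ∈ upList T v w, T.InSubtree v x ∧ T.InSubtree x w := by
  refine T.sub_induct (fun w => ∀ x ∈ upList T v w, T.InSubtree v x ∧ T.InSubtree x w) ?_ ?_ w h
  · intro x hx
    rw [upList_self] at hx
    simp only [List.mem_singleton] at hx
    subst hx
    exact ⟨T.inSub_self x, T.inSub_self x⟩
  · intro w hw h1 ih x hx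
    rw [upList_cons T hw h1, List.mem_cons] at hx
    rcases hx with rfl | hx
    · exact ⟨T.inSub_of_parent h1, T.inSub_self x⟩
    · exact ⟨(ih x hx).1, T.inSub_of_parent (ih x hx).2⟩

theorem upList_child (T : RTree V) {a v w : V} (hc : T.IsChild a v) (h : T.InSubtree a w) :
    upList T v w = upList T a w ++ [v] := by
  refine T.sub_induct (fun w => upList T v w = upList T a w ++ [v]) ?_ ?_ w h
  · rw [upList_cons T hc.1 (by rw [hc.2]; exact T.inSub_self v), hc.2, upList_self, upList_self]
    rfl
  · intro w hw h1 ih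
    have hwv : w ≠ v := by
      rintro rfl
      exact T.not_sub hc (T.inSub_of_parent h1)
    rw [upList_cons T hw h1, upList_cons T hwv (T.inSub_trans (T.child_sub hc) h1), ih]
    rfl

theorem upList_nodup (T : RTree V) {v w : V} (h : T.InSubtree v w) : (upList T v w).Nodup := by
  refine T.sub_induct (fun w => (upList T v w).Nodup) ?_ ?_ w h
  · simp [upList_self]
  · intro w hw h1 ih
    rw [upList_cons T hw h1, List.nodup_cons]
    refine ⟨fun hm => ?_, ih⟩
    have := T.cyc' (upList_sub T h1 w hm).2
    subst this
    obtain ⟨n, hn⟩ := h1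
    rw [T.parent_root, T.iter_root] at hn
    exact hw hn

theorem mem_pathEdges_iff (l : List V) (x y : V) : (x, y) ∈ pathEdges l ↔ [x, y] <:+: l := by
  induction l with
  | nil => simp [pathEdges]
  | cons z l ih =>
    rw [List.infix_cons_iff, ← ih]
    cases l with
    | nil => simp [pathEdges]
    | cons u l => simp [pathEdges, List.prefix_cons_iff]

theorem mem_of_pathEdges {l : List V} {e : V × V} (h : e ∈ pathEdges l) : e.1 ∈ l ∧ e.2 ∈ l := by
  have h := (mem_pathEdges_iff l e.1 e.2).1 h
  exact ⟨h.subset (by simp), h.subset (by simp)⟩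

theorem mem_pathEdges_reverse (l : List V) (x y : V) :
    (x, y) ∈ pathEdges l.reverse ↔ (y, x) ∈ pathEdges l := by
  rw [mem_pathEdges_iff, mem_pathEdges_iff, ← List.reverse_infix]
  simp

theorem pathEdges_cons_cons_s6 (x y : V) (l : List V) :
    pathEdges (x :: y :: l) = (x, y) :: pathEdges (y :: l) := rfl

theorem isChain_iff_pathEdges (R : V → V → Prop) (l : List V) :
    List.IsChain R l ↔ ∀ e ∈ pathEdges l, R e.1 e.2 := by
  induction l with
  | nil => simp [pathEdges]
  | cons x l ih =>
    cases l with
    | nil => simp [pathEdges]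
    | cons y l => simp [List.isChain_cons_cons, pathEdges_cons_cons_s6, ih]

theorem onUp_self (T : RTree V) (v : V) (e : V × V) : ¬ onUp T v v e := by
  rintro ⟨i, -, -, h⟩
  exact h 0 (Nat.zero_le _) rfl

theorem onUp_succ (T : RTree V) {v w : V} (hw : w ≠ v) (e : V × V) :
    onUp T v w e ↔ e = (w, T.parent w) ∨ onUp T v (T.parent w) e := by
  constructor
  · rintro ⟨i, h1, h2, h3⟩
    cases i with
    | zero =>
      left
      simp only [Function.iterate_zero, id] at h1
      ext
      · exact h1.symm
      · rw [← h2, h1]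
    | succ i =>
      right
      refine ⟨i, by simpa [Function.iterate_succ_apply] using h1, h2, fun j hj => ?_⟩
      simpa [Function.iterate_succ_apply] using h3 (j + 1) (by omega)
  · rintro (rfl | ⟨i, h1, h2, h3⟩)
    · refine ⟨0, rfl, rfl, fun j hj => ?_⟩
      obtain rfl : j = 0 := by omega
      exact hw
    · refine ⟨i + 1, by simpa [Function.iterate_succ_apply] using h1, h2, fun j hj => ?_⟩
      cases j with
      | zero => exact hw
      | succ j =>
        simpa [Function.iterate_succ_apply] using h3 j (by omega)

theorem onUp_append (T : RTree V) {v w : V} (h : T.InSubtree v w) (l : List V) (e : V × V) :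
    e ∈ pathEdges (upList T v w ++ l) ↔ onUp T v w e ∨ e ∈ pathEdges (v :: l) := by
  refine T.sub_induct (fun w => e ∈ pathEdges (upList T v w ++ l) ↔
    onUp T v w e ∨ e ∈ pathEdges (v :: l)) ?_ ?_ w h
  · simp [upList_self, onUp_self]
  · intro w hw h1 ih
    obtain ⟨l', hl'⟩ := upList_head T h1
    rw [onUp_succ T hw, or_assoc, ← ih, upList_cons T hw h1, hl']
    simp [pathEdges_cons_cons_s6]

theorem onUp_iff (T : RTree V) {v w : V} (h : T.InSubtree v w) (e : V × V) :
    onUp T v w e ↔ e ∈ pathEdges (upList T v w) := by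
  have := onUp_append T h [] e
  simpa [pathEdges] using this.symm

theorem onUp_sub (T : RTree V) {v w : V} (h : T.InSubtree v w) {e : V × V}
    (he : onUp T v w e) : T.InSubtree v e.1 ∧ T.InSubtree v e.2 := by
  have := mem_of_pathEdges ((onUp_iff T h e).1 he)
  exact ⟨(upList_sub T h _ this.1).1, (upList_sub T h _ this.2).1⟩

theorem onUp_child (T : RTree V) {a v w : V} (hc : T.IsChild a v) (h : T.InSubtree a w)
    (e : V × V) : onUp T v w e ↔ onUp T a w e ∨ e = (a, v) := by
  rw [onUp_iff T (T.inSub_trans (T.child_sub hc) h), upList_child T hc h, onUp_append T h]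
  simp [pathEdges]

theorem crossPath_eq (T : RTree V) {a b v x y : V} (ha : T.IsChild a v) (hb : T.IsChild b v)
    (hx : T.InSubtree a x) (hy : T.InSubtree b y) :
    upList T v x ++ (downList T v y).tail = upList T a x ++ v :: (upList T b y).reverse := by
  unfold downList
  rw [upList_child T ha hx, upList_child T hb hy]
  simp

theorem mem_crossPath (T : RTree V) {v x y : V}
    (hx : T.InSubtree v x) (hy : T.InSubtree v y) (e : V × V) :
    e ∈ pathEdges (upList T v x ++ (downList T v y).tail) ↔ onUp T v x e ∨ onDown T v y e := by
  rw [onUp_append T hx]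
  have : v :: (downList T v y).tail = (upList T v y).reverse := by
    unfold downList
    have : ∃ l, upList T v y = l ++ [v] := by
      refine T.sub_induct (fun w => ∃ l, upList T v w = l ++ [v]) ⟨[], upList_self T v⟩ ?_ y hy
      rintro w hw h1 ⟨l, hl⟩
      exact ⟨w :: l, by rw [upList_cons T hw h1, hl]; rfl⟩
    obtain ⟨l, hl⟩ := this
    simp [hl]
  rw [this, onDown, onUp_iff T hy, mem_pathEdges_reverse]

theorem onUp_edge (T : RTree V) {v w : V} (h : T.InSubtree v w) {e : V × V}
    (he : onUp T v w e) : e.1 ≠ e.2 ∧ T.parent e.1 = e.2 := by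
  obtain ⟨i, h1, h2, h3⟩ := he
  refine ⟨fun hh => ?_, h2⟩
  have he := onUp_sub T h ⟨i, h1, h2, h3⟩
  have hv : e.1 ≠ v := by rw [← h1]; exact h3 i le_rfl
  obtain ⟨n, hn⟩ := he.1
  rw [← hh] at h2
  rw [Function.iterate_fixed h2] at hn
  exact hv hn

theorem crossPath_isDiPath [Fintype V] [DecidableEq V] (T : RTree V) {a b v x y : V}
    (ha : T.IsChild a v) (hb : T.IsChild b v)
    (hab : a ≠ b) (hx : T.InSubtree a x) (hy : T.InSubtree b y) :
    IsDiPath (fun p q => (p, q) ∈ T.edges) x y (upList T v x ++ (downList T v y).tail) ∧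
    ∀ z ∈ upList T v x ++ (downList T v y).tail, T.InSubtree v z := by
  have hx' := T.inSub_trans (T.child_sub ha) hx
  have hy' := T.inSub_trans (T.child_sub hb) hy
  refine ⟨⟨?_, ?_, ?_, ?_⟩, ?_⟩
  · obtain ⟨l, hl⟩ := upList_head T hx'
    simp [hl]
  · rw [crossPath_eq T ha hb hx hy]
    obtain ⟨l, hl⟩ := upList_head T hy
    simp [hl, List.getLast?_append, List.getLast?_cons]
  · refine (isChain_iff_pathEdges _ _).2 fun e he => ?_
    rw [mem_crossPath T hx' hy'] at he
    rcases he with he | he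
    · have := onUp_edge T hx' he
      simp [RTree.edges, this.1, this.2]
    · have := onUp_edge T hy' he
      simp only at this
      simp [RTree.edges, this.1.symm, this.2]
  · rw [crossPath_eq T ha hb hx hy, List.nodup_append]
    refine ⟨upList_nodup T hx, ?_, ?_⟩
    · rw [List.nodup_cons, List.mem_reverse, List.nodup_reverse]
      exact ⟨fun h => T.not_sub hb (upList_sub T hy v h).1, upList_nodup T hy⟩
    · rintro p hp q hq rfl
      have hpa := (upList_sub T hx p hp).1
      rw [List.mem_cons, List.mem_reverse] at hq
      rcases hq with rfl | hq
      · exact T.not_sub ha hpa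
      · exact T.sub_disj ha hb hab hpa (upList_sub T hy p hq).1
  · intro z hz
    rw [crossPath_eq T ha hb hx hy, List.mem_append, List.mem_cons, List.mem_reverse] at hz
    rcases hz with hz | rfl | hz
    · exact T.inSub_trans (T.child_sub ha) (upList_sub T hx z hz).1
    · exact T.inSub_self z
    · exact T.inSub_trans (T.child_sub hb) (upList_sub T hy z hz).1

end Helpers

section Helpers2

variable {VS VR : Type*} {τ : ℕ}

/-- substrate edges used by the request edge `e` -/
noncomputable def usedEdges [Fintype VS] (T : RTree VS) (v : VS) (X : Finset VR)
    (M : Mapping VS VR) (e : VR × VR) : Finset (VS × VS) :=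
  if e.1 ∈ X then
    (if e.2 ∈ X then (pathEdges (M.mE e)).toFinset else upEdges T v (M.mV e.1))
  else (if e.2 ∈ X then downEdges T v (M.mV e.2) else ∅)

theorem inducedCost_eq [Fintype VS] [DecidableEq VS] (I : VNEP VS VR τ)
    (T : RTree VS) (v : VS) (X : Finset VR) (M : Mapping VS VR) :
    inducedCost I T v X M = (∑ w ∈ X, ∑ t, I.dRv w t * I.cSv (M.mV w) t) +
      ∑ e ∈ I.ER, ∑ e' ∈ usedEdges T v X M e, ∑ t, I.dRe e t * I.cSe e' t := by
  unfold inducedCost ERin cutP cutN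
  rw [add_assoc, add_assoc, Finset.sum_filter, Finset.sum_filter, Finset.sum_filter,
    ← Finset.sum_add_distrib, ← Finset.sum_add_distrib]
  congr 1
  refine Finset.sum_congr rfl fun e _ => ?_
  unfold usedEdges
  by_cases h1 : e.1 ∈ X <;> by_cases h2 : e.2 ∈ X <;> simp [h1, h2]
  refine Finset.sum_congr ?_ fun _ _ => rfl
  ext; simp

theorem load_eq [Fintype VS] (I : VNEP VS VR τ)
    (T : RTree VS) (v : VS) (X : Finset VR) (M : Mapping VS VR) (eS : VS × VS) (t : Fin τ) :
    ((∑ eR ∈ (ERin I X).filter (fun eR => eS ∈ pathEdges (M.mE eR)), I.dRe eR t) +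
        (∑ e ∈ EvSet I T v X M.mV eS, I.dRe e t)) =
      ∑ e ∈ I.ER, ∑ e' ∈ usedEdges T v X M e, if e' = eS then I.dRe e t else 0 := by
  unfold EvSet
  rw [Finset.sum_union]
  · unfold ERin cutP cutN
    rw [Finset.sum_filter, Finset.sum_filter, Finset.sum_filter, Finset.sum_filter,
      Finset.sum_filter, Finset.sum_filter,
      ← Finset.sum_add_distrib, ← Finset.sum_add_distrib]
    refine Finset.sum_congr rfl fun e _ => ?_
    rw [Finset.sum_ite_eq']
    unfold usedEdges upEdges downEdges
    by_cases h1 : e.1 ∈ X <;> by_cases h2 : e.2 ∈ X <;> simp [h1, h2]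
  · rw [Finset.disjoint_left]
    intro e h1 h2
    simp only [cutP, cutN, Finset.mem_filter] at h1 h2
    exact h2.1.2.1 h1.1.2.1

theorem mem_downEdges [Fintype VS] (T : RTree VS) (v w x y : VS) :
    (x, y) ∈ downEdges T v w ↔ onUp T v w (y, x) := by
  unfold downEdges
  rw [Finset.mem_filter]
  exact ⟨fun h => h.2, fun h => ⟨Finset.mem_univ _, h⟩⟩

theorem sum_cutP [DecidableEq VR] (I : VNEP VS VR τ) (A : Finset VR) (f : VR × VR → ℝ≥0) :
    ∑ e ∈ cutP I A, f e = ∑ e ∈ I.ER, if e.1 ∈ A ∧ e.2 ∉ A then f e else 0 := by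
  rw [cutP, Finset.sum_filter]
  refine Finset.sum_congr rfl fun e _ => ?_
  congr

theorem sum_cutN [DecidableEq VR] (I : VNEP VS VR τ) (A : Finset VR) (f : VR × VR → ℝ≥0) :
    ∑ e ∈ cutN I A, f e = ∑ e ∈ I.ER, if e.1 ∉ A ∧ e.2 ∈ A then f e else 0 := by
  rw [cutN, Finset.sum_filter]
  refine Finset.sum_congr rfl fun e _ => ?_
  congr

theorem sum_upEdges_child [Fintype VS] (T : RTree VS) {a v w : VS} (hc : T.IsChild a v)
    (h : T.InSubtree a w) (f : VS × VS → ℝ≥0) :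
    ∑ e ∈ upEdges T v w, f e = ∑ e ∈ upEdges T a w, f e + f (a, v) := by
  have : upEdges T v w = insert (a, v) (upEdges T a w) := by
    ext e
    simp [upEdges, onUp_child T hc h, or_comm]
  rw [this, Finset.sum_insert, add_comm]
  simp only [upEdges, Finset.mem_filter, Finset.mem_univ, true_and]
  intro hh
  exact T.not_sub hc (onUp_sub T h hh).2

theorem sum_downEdges_child [Fintype VS] (T : RTree VS) {a v w : VS} (hc : T.IsChild a v)
    (h : T.InSubtree a w) (f : VS × VS → ℝ≥0) :
    ∑ e ∈ downEdges T v w, f e = ∑ e ∈ downEdges T a w, f e + f (v, a) := by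
  have : downEdges T v w = insert (v, a) (downEdges T a w) := by
    ext ⟨x, y⟩
    simp only [mem_downEdges, onUp_child T hc h, Finset.mem_insert, Prod.mk.injEq]
    tauto
  rw [this, Finset.sum_insert, add_comm]
  rw [mem_downEdges]
  intro hh
  exact T.not_sub hc (onUp_sub T h hh).2

theorem sum_crossPath [Fintype VS] (T : RTree VS) {a b v x y : VS}
    (ha : T.IsChild a v) (hb : T.IsChild b v)
    (hab : a ≠ b) (hx : T.InSubtree a x) (hy : T.InSubtree b y) (f : VS × VS → ℝ≥0) :
    ∑ e ∈ (pathEdges (upList T v x ++ (downList T v y).tail)).toFinset, f e =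
      (∑ e ∈ upEdges T a x, f e + f (a, v)) + (∑ e ∈ downEdges T b y, f e + f (v, b)) := by
  have hx' := T.inSub_trans (T.child_sub ha) hx
  have hy' := T.inSub_trans (T.child_sub hb) hy
  rw [← sum_upEdges_child T ha hx, ← sum_downEdges_child T hb hy, ← Finset.sum_union]
  · refine Finset.sum_congr ?_ fun _ _ => rfl
    ext e
    simp [upEdges, downEdges, mem_crossPath T hx' hy']
  · rw [Finset.disjoint_left]
    rintro ⟨p, q⟩ h1 h2
    simp only [upEdges, Finset.mem_filter, Finset.mem_univ, true_and] at h1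
    rw [mem_downEdges] at h2
    rw [onUp_child T ha hx] at h1
    rw [onUp_child T hb hy] at h2
    have hp : T.InSubtree a p := by
      rcases h1 with h1 | h1
      · exact (onUp_sub T hx h1).1
      · obtain ⟨rfl, -⟩ := Prod.mk.inj h1
        exact T.inSub_self p
    rcases h2 with h2 | h2
    · exact T.sub_disj ha hb hab hp (onUp_sub T hy h2).2
    · obtain ⟨-, rfl⟩ := Prod.mk.inj h2
      exact T.not_sub ha hp

theorem sum_used [Fintype VS] [DecidableEq VR] (T : RTree VS) {a b v : VS}
    (ha : T.IsChild a v) (hb : T.IsChild b v) (hab : a ≠ b)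
    (A B : Finset VR) (hAB : Disjoint A B) (Ma Mb : Mapping VS VR)
    (hMa : ∀ w ∈ A, T.InSubtree a (Ma.mV w)) (hMb : ∀ w ∈ B, T.InSubtree b (Mb.mV w))
    (f : VS × VS → ℝ≥0) (e : VR × VR) :
    ∑ e' ∈ usedEdges T v (A ∪ B) (combineMapping T v A B Ma Mb) e, f e' =
      ∑ e' ∈ usedEdges T a A Ma e, f e' + ∑ e' ∈ usedEdges T b B Mb e, f e' +
      (if e.1 ∉ A ∧ e.2 ∈ A then f (v, a) else 0) +
      (if e.1 ∈ A ∧ e.2 ∉ A then f (a, v) else 0) +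
      (if e.1 ∉ B ∧ e.2 ∈ B then f (v, b) else 0) +
      (if e.1 ∈ B ∧ e.2 ∉ B then f (b, v) else 0) := by
  have hd : ∀ w ∈ A, w ∉ B := fun w h h' => Finset.disjoint_left.1 hAB h h'
  have tri : ∀ w, (w ∈ A ∧ w ∉ B) ∨ (w ∉ A ∧ w ∈ B) ∨ (w ∉ A ∧ w ∉ B) := by
    intro w
    have := hd w
    tauto
  unfold usedEdges combineMapping
  rcases tri e.1 with h1 | h1 | h1 <;> rcases tri e.2 with h2 | h2 | h2 <;>
    simp only [Finset.mem_union, h1.1, h1.2, h2.1, h2.2, if_true, if_false, or_true, true_or,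
      or_false, false_or, and_true, true_and, and_false, false_and, and_self, not_true, not_false_iff,
      Finset.sum_empty, add_zero, zero_add, or_self]
  · rw [sum_crossPath T ha hb hab (hMa _ h1.1) (hMb _ h2.2)]; ring
  · rw [sum_upEdges_child T ha (hMa _ h1.1)]
  · rw [sum_crossPath T hb ha hab.symm (hMb _ h1.2) (hMa _ h2.1)]; ring
  · rw [sum_upEdges_child T hb (hMb _ h1.2)]
  · rw [sum_downEdges_child T ha (hMa _ h2.1)]
  · rw [sum_downEdges_child T hb (hMb _ h2.2)]

theorem used_sub [Fintype VS] (I : VNEP VS VR τ) (T : RTree VS) {a : VS}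
    {A : Finset VR} {Ma : Mapping VS VR} (hMa : Desirable I T a A Ma) {e : VR × VR}
    (he : e ∈ I.ER) {e' : VS × VS} (h : e' ∈ usedEdges T a A Ma e) :
    T.InSubtree a e'.1 ∧ T.InSubtree a e'.2 := by
  unfold usedEdges at h
  split_ifs at h with h1 h2 h2
  · have := mem_of_pathEdges (List.mem_toFinset.1 h)
    have h3 := (hMa.2.1 e (by simp [ERin, he, h1, h2])).2
    exact ⟨h3 _ this.1, h3 _ this.2⟩
  · simp only [upEdges, Finset.mem_filter, Finset.mem_univ, true_and] at h
    exact onUp_sub T (hMa.1 _ h1) h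
  · obtain ⟨x, y⟩ := e'
    rw [mem_downEdges] at h
    exact (onUp_sub T (hMa.1 _ h2) h).symm
  · simp at h

theorem load_zero [Fintype VS] (I : VNEP VS VR τ) (T : RTree VS) {a : VS}
    {A : Finset VR} {Ma : Mapping VS VR} (hMa : Desirable I T a A Ma) (eS : VS × VS) (t : Fin τ)
    (h : ¬ (T.InSubtree a eS.1 ∧ T.InSubtree a eS.2)) :
    (∑ e ∈ I.ER, ∑ e' ∈ usedEdges T a A Ma e, if e' = eS then I.dRe e t else 0) = 0 := by
  refine Finset.sum_eq_zero fun e he => Finset.sum_eq_zero fun e' he' => ?_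
  rw [if_neg]
  rintro rfl
  exact h (used_sub I T hMa he he')

theorem edge_cases [Fintype VS] [DecidableEq VS] (T : RTree VS) {a b v : VS}
    (ha : T.IsChild a v) (hb : T.IsChild b v) (hch : ∀ c, T.IsChild c v → c = a ∨ c = b)
    {x y : VS} (hx : T.InSubtree v x) (hy : T.InSubtree v y) (hne : x ≠ y)
    (hp : T.parent x = y) :
    (T.InSubtree a x ∧ T.InSubtree a y) ∨ (T.InSubtree b x ∧ T.InSubtree b y) ∨
      (x = a ∧ y = v) ∨ (x = b ∧ y = v) := by
  have hxv : x ≠ v := by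
    rintro rfl
    have := T.cyc' (w := x) (hp ▸ hy)
    obtain rfl := hp
    rw [this, T.parent_root] at hne
    exact hne rfl
  rcases T.sub_cases hx with h | ⟨c, hc, hcx⟩
  · exact absurd h hxv
  · have : (x = c ∧ y = v) ∨ (T.InSubtree c x ∧ T.InSubtree c y) := by
      by_cases hxc : x = c
      · left
        refine ⟨hxc, ?_⟩
        rw [← hp, hxc, hc.2]
      · right
        exact ⟨hcx, hp ▸ T.inSub_parent hcx hxc⟩
    rcases hch c hc with rfl | rfl <;> tauto

theorem node_load [DecidableEq VR] (I : VNEP VS VR τ) (T : RTree VS) {a b v : VS}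
    (ha : T.IsChild a v) (hb : T.IsChild b v) (hab : a ≠ b)
    (A B : Finset VR) (hAB : Disjoint A B) (Ma Mb : Mapping VS VR)
    (hMa : Desirable I T a A Ma) (hMb : Desirable I T b B Mb) (mV : VR → VS)
    (hmA : ∀ w ∈ A, mV w = Ma.mV w) (hmB : ∀ w ∈ B, mV w = Mb.mV w) (s : VS) (t : Fin τ) :
    ((∑ w ∈ (A ∪ B).filter (fun w => mV w = s), I.dRv w t : ℝ≥0) : ℝ≥0∞) ≤ I.dSv s t := by
  have hsum : (∑ w ∈ (A ∪ B).filter (fun w => mV w = s),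
      I.dRv w t) = (∑ w ∈ A.filter (fun w => Ma.mV w = s), I.dRv w t) +
        ∑ w ∈ B.filter (fun w => Mb.mV w = s), I.dRv w t := by
    rw [Finset.sum_filter, Finset.sum_filter, Finset.sum_filter, Finset.sum_union hAB]
    congr 1
    · exact Finset.sum_congr rfl fun w hw => by rw [hmA w hw]
    · exact Finset.sum_congr rfl fun w hw => by rw [hmB w hw]
  rw [hsum]
  by_cases hs : T.InSubtree a s
  · have h0 : (∑ w ∈ B.filter (fun w => Mb.mV w = s), I.dRv w t) = 0 := by
      rw [Finset.filter_false_of_mem, Finset.sum_empty]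
      rintro w hw rfl
      exact T.sub_disj ha hb hab hs (hMb.1 w hw)
    rw [h0, add_zero]
    exact hMa.2.2.1 s t
  · have h0 : (∑ w ∈ A.filter (fun w => Ma.mV w = s), I.dRv w t) = 0 := by
      rw [Finset.filter_false_of_mem, Finset.sum_empty]
      rintro w hw rfl
      exact hs (hMa.1 w hw)
    rw [h0, zero_add]
    exact hMb.2.2.1 s t

end Helpers2

/-- Combination step of the DP correctness proof: in the DP setting, given disjoint `A`, `B`
with `X = A ∪ B`, a desirable mapping of `G_R[A]` into `T_a` and a desirable mapping of
`G_R[B]` into `T_b` (for the two children `a`, `b` of `v`), such that the cut demands fit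
into the capacities of the four edges between `v` and its children, the combined mapping is
a desirable mapping of `G_R[X]` into `T_v`, and its induced cost is the sum of the two
induced costs plus the cost of routing the cut edges over the edges between `v` and its
children. -/
theorem combine_desirable_mappings {VS VR : Type*} [Fintype VS] [DecidableEq VS]
    [Fintype VR] [DecidableEq VR] {τ : ℕ} (I : VNEP VS VR τ) (T : RTree VS)
    (hDP : DPSetting I T) (v a b : VS) (hab : a ≠ b) (hch : childrenOf T v = {a, b})
    (A B : Finset VR) (hAB : Disjoint A B) (Ma Mb : Mapping VS VR)
    (hMa : Desirable I T a A Ma) (hMb : Desirable I T b B Mb)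
    (hcapPA : ∀ t, ((∑ e ∈ cutP I A, I.dRe e t : ℝ≥0) : ℝ≥0∞) ≤ I.dSe (a, v) t)
    (hcapNA : ∀ t, ((∑ e ∈ cutN I A, I.dRe e t : ℝ≥0) : ℝ≥0∞) ≤ I.dSe (v, a) t)
    (hcapPB : ∀ t, ((∑ e ∈ cutP I B, I.dRe e t : ℝ≥0) : ℝ≥0∞) ≤ I.dSe (b, v) t)
    (hcapNB : ∀ t, ((∑ e ∈ cutN I B, I.dRe e t : ℝ≥0) : ℝ≥0∞) ≤ I.dSe (v, b) t) :
    Desirable I T v (A ∪ B) (combineMapping T v A B Ma Mb) ∧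
    inducedCost I T v (A ∪ B) (combineMapping T v A B Ma Mb) =
      inducedCost I T a A Ma + inducedCost I T b B Mb +
      (∑ e ∈ cutN I A, ∑ t, I.dRe e t * I.cSe (v, a) t) +
      (∑ e ∈ cutP I A, ∑ t, I.dRe e t * I.cSe (a, v) t) +
      (∑ e ∈ cutN I B, ∑ t, I.dRe e t * I.cSe (v, b) t) +
      (∑ e ∈ cutP I B, ∑ t, I.dRe e t * I.cSe (b, v) t) := by
  have hc : ∀ c, T.IsChild c v ↔ c = a ∨ c = b := by
    intro c
    have : c ∈ childrenOf T v ↔ c ∈ ({a, b} : Finset VS) := by rw [hch]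
    simpa [childrenOf] using this
  have ha : T.IsChild a v := (hc a).2 (Or.inl rfl)
  have hb : T.IsChild b v := (hc b).2 (Or.inr rfl)
  have key := sum_used T ha hb hab A B hAB Ma Mb hMa.1 hMb.1
  have hd : ∀ w ∈ A, w ∉ B := fun w h h' => Finset.disjoint_left.1 hAB h h'
  have hmA : ∀ w ∈ A, (combineMapping T v A B Ma Mb).mV w = Ma.mV w := by
    intro w hw
    simp [combineMapping, hw]
  have hmB : ∀ w ∈ B, (combineMapping T v A B Ma Mb).mV w = Mb.mV w := by
    intro w hw
    have : w ∉ A := fun h => hd w h hw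
    simp [combineMapping, this]
  have subA := fun x => T.inSub_trans (w := x) (T.child_sub ha)
  have subB := fun x => T.inSub_trans (w := x) (T.child_sub hb)
  refine ⟨⟨?_, ?_, ?_, ?_⟩, ?_⟩
  · intro w hw
    rcases Finset.mem_union.1 hw with h | h
    · rw [hmA w h]; exact subA _ (hMa.1 w h)
    · rw [hmB w h]; exact subB _ (hMb.1 w h)
  · intro e he
    simp only [ERin, Finset.mem_filter, Finset.mem_union] at he
    obtain ⟨heR, h1, h2⟩ := he
    rcases h1 with h1 | h1 <;> rcases h2 with h2 | h2
    · rw [hmA _ h1, hmA _ h2]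
      have := hMa.2.1 e (by simp [ERin, heR, h1, h2])
      have hE : (combineMapping T v A B Ma Mb).mE e = Ma.mE e := by
        simp [combineMapping, h1, h2]
      rw [hE]
      exact ⟨this.1, fun x hx => subA _ (this.2 x hx)⟩
    · have h2' : e.2 ∉ A := fun h => hd _ h h2
      have hE : (combineMapping T v A B Ma Mb).mE e =
          upList T v (Ma.mV e.1) ++ (downList T v (Mb.mV e.2)).tail := by
        simp [combineMapping, h1, h2, h2', hd _ h1]
      rw [hE, hmA _ h1, hmB _ h2, hDP.1]
      exact crossPath_isDiPath T ha hb hab (hMa.1 _ h1) (hMb.1 _ h2)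
    · have h1' : e.1 ∉ A := fun h => hd _ h h1
      have hE : (combineMapping T v A B Ma Mb).mE e =
          upList T v (Mb.mV e.1) ++ (downList T v (Ma.mV e.2)).tail := by
        simp [combineMapping, h1, h2, h1', hd _ h2]
      rw [hE, hmB _ h1, hmA _ h2, hDP.1]
      exact crossPath_isDiPath T hb ha hab.symm (hMb.1 _ h1) (hMa.1 _ h2)
    · have h1' : e.1 ∉ A := fun h => hd _ h h1
      rw [hmB _ h1, hmB _ h2]
      have := hMb.2.1 e (by simp [ERin, heR, h1, h2])
      have hE : (combineMapping T v A B Ma Mb).mE e = Mb.mE e := by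
        simp [combineMapping, h1, h2, h1']
      rw [hE]
      exact ⟨this.1, fun x hx => subB _ (this.2 x hx)⟩
  · intro s t
    exact node_load I T ha hb hab A B hAB Ma Mb hMa hMb _ hmA hmB s t
  · intro eS heS h1 h2 t
    rw [load_eq]
    simp only [key, Finset.sum_add_distrib]
    obtain ⟨x, y⟩ := eS
    have hE := heS
    rw [hDP.1] at hE
    simp only [RTree.edges, Finset.mem_filter, Finset.mem_univ, true_and] at hE
    simp only at h1 h2
    have hav := T.not_sub ha
    have hbv := T.not_sub hb
    have hnv : a ≠ v := ha.1
    have hnv' : b ≠ v := hb.1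
    have LA := fun h => hMa.2.2.2 (x, y) heS h
    have LB := fun h => hMb.2.2.2 (x, y) heS h
    simp only [load_eq] at LA LB
    have ZA := load_zero I T hMa (x, y) t
    have ZB := load_zero I T hMb (x, y) t
    have hcases : (T.InSubtree a x ∧ T.InSubtree a y) ∨ (T.InSubtree b x ∧ T.InSubtree b y) ∨
      (x = a ∧ y = v) ∨ (x = b ∧ y = v) ∨ (x = v ∧ y = a) ∨ (x = v ∧ y = b) := by
      rcases hE with ⟨hne, hp | hp⟩
      · have := edge_cases T ha hb (fun c => (hc c).1) h1 h2 hne hp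
        rcases this with h | h | h | h
        · exact Or.inl h
        · exact Or.inr (Or.inl h)
        · exact Or.inr (Or.inr (Or.inl h))
        · exact Or.inr (Or.inr (Or.inr (Or.inl h)))
      · have := edge_cases T ha hb (fun c => (hc c).1) h2 h1 hne.symm hp
        rcases this with h | h | h | h
        · exact Or.inl h.symm
        · exact Or.inr (Or.inl h.symm)
        · exact Or.inr (Or.inr (Or.inr (Or.inr (Or.inl h.symm))))
        · exact Or.inr (Or.inr (Or.inr (Or.inr (Or.inr h.symm))))
    rcases hcases with h | h | ⟨rfl, rfl⟩ | ⟨rfl, rfl⟩ | ⟨rfl, rfl⟩ | ⟨rfl, rfl⟩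
    · have hxv : v ≠ x := by rintro rfl; exact hav h.1
      have hyv : v ≠ y := by rintro rfl; exact hav h.2
      rw [ZB (fun h' => T.sub_disj ha hb hab h.1 h'.1)]
      simpa [hxv, hyv] using LA h.1 h.2 t
    · have hxv : v ≠ x := by rintro rfl; exact hbv h.1
      have hyv : v ≠ y := by rintro rfl; exact hbv h.2
      rw [ZA (fun h' => T.sub_disj ha hb hab h'.1 h.1)]
      simpa [hxv, hyv] using LB h.1 h.2 t
    · rw [ZA (fun h' => hav h'.2), ZB (fun h' => hbv h'.2)]
      have := hcapPA t
      rw [sum_cutP] at this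
      simpa [hnv, hnv', hnv.symm, hnv'.symm, hab, hab.symm] using this
    · rw [ZA (fun h' => hav h'.2), ZB (fun h' => hbv h'.2)]
      have := hcapPB t
      rw [sum_cutP] at this
      simpa [hnv, hnv', hnv.symm, hnv'.symm, hab, hab.symm] using this
    · rw [ZA (fun h' => hav h'.1), ZB (fun h' => hbv h'.1)]
      have := hcapNA t
      rw [sum_cutN] at this
      simpa [hnv, hnv', hnv.symm, hnv'.symm, hab, hab.symm] using this
    · rw [ZA (fun h' => hav h'.1), ZB (fun h' => hbv h'.1)]
      have := hcapNB t
      rw [sum_cutN] at this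
      simpa [hnv, hnv', hnv.symm, hnv'.symm, hab, hab.symm] using this
  · rw [inducedCost_eq, inducedCost_eq, inducedCost_eq, Finset.sum_union hAB]
    have e1 : ∑ w ∈ A, ∑ t, I.dRv w t * I.cSv ((combineMapping T v A B Ma Mb).mV w) t =
        ∑ w ∈ A, ∑ t, I.dRv w t * I.cSv (Ma.mV w) t :=
      Finset.sum_congr rfl fun w hw => by rw [hmA w hw]
    have e2 : ∑ w ∈ B, ∑ t, I.dRv w t * I.cSv ((combineMapping T v A B Ma Mb).mV w) t =
        ∑ w ∈ B, ∑ t, I.dRv w t * I.cSv (Mb.mV w) t :=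
      Finset.sum_congr rfl fun w hw => by rw [hmB w hw]
    rw [e1, e2, Finset.sum_congr rfl fun e _ => key (fun e' => ∑ t, I.dRe e t * I.cSe e' t) e]
    simp only [Finset.sum_add_distrib, sum_cutP, sum_cutN]
    ring
end

section
/- Let k ≥ 1 and let G be a finite undirected graph whose vertex set is partitioned into parts V_1, …, V_k such that no edge of G joins two vertices of the same part. Construct: a substrate digraph on V(G) containing the edge (w_i, w_j) for every edge {w_i, w_j} of G with w_i ∈ V_i, w_j ∈ V_j and i < j, where every substrate edge has capacity 1 and cost 1, and every node w ∈ V_i has capacity i+1 and cost i+1; a request with nodes v_1, …, v_k, where v_i has demand i+1, and with edges (v_i, v_j) for all 1 ≤ i < j ≤ k, each of demand 1; and the bound k′ := Σ_{i=1}^{k} (i+1)² + k(k−1)/2. Then G contains a clique with exactly one vertex in each part V_i (a multicolored clique) if and only if there exists a valid mapping of the request into the substrate of cost at most k′. -/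
open scoped BigOperators

/-- The substrate digraph of the Multicolored Clique reduction: an edge from `x` to `y`
whenever `{x, y}` is an edge of `G` and the part of `x` has smaller index than that of `y`. -/
def SubEdge {W : Type*} {k : ℕ} (E : W → W → Prop) (col : W → Fin k) (x y : W) : Prop :=
  E x y ∧ col x < col y

/-- A candidate mapping of the request of the Multicolored Clique reduction:
node `v_i` (0-indexed: `i : Fin k`, demand `i + 2`) is mapped to `mV i`, and the request edge
`(v_i, v_j)` for `i < j` is mapped to the vertex list `mE i j`. -/
structure MCMapping (W : Type*) (k : ℕ) where
  mV : Fin k → W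
  mE : Fin k → Fin k → List W

/-- Validity of a mapping in the Multicolored Clique reduction: node `v_i` is mapped to a
node of capacity at least its demand, i.e. to a part `V_h` with `h ≥ i`, and every request
edge `(v_i, v_j)` with `i < j` is mapped to a simple directed path in the substrate from
`mV i` to `mV j` (possibly of length zero). -/
def MCMapping.Valid {W : Type*} {k : ℕ} (E : W → W → Prop) (col : W → Fin k)
    (M : MCMapping W k) : Prop :=
  (∀ i : Fin k, (i : ℕ) ≤ (col (M.mV i) : ℕ)) ∧
  ∀ i j : Fin k, i < j → IsDiPath (SubEdge E col) (M.mV i) (M.mV j) (M.mE i j)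

/-- The cost of a mapping: each node `v_i` (demand `i + 2`) mapped to a node of `V_h`
(cost `h + 2`) contributes `(i + 2) * (h + 2)`, and each request edge contributes the number
of substrate edges on its path (each of cost `1`, demand `1`). -/
def MCMapping.cost {W : Type*} {k : ℕ} (col : W → Fin k) (M : MCMapping W k) : ℕ :=
  (∑ i : Fin k, ((i : ℕ) + 2) * ((col (M.mV i) : ℕ) + 2)) +
    ∑ i : Fin k, ∑ j : Fin k, if i < j then (M.mE i j).length - 1 else 0

theorem mc_pair_count (k : ℕ) :
    (∑ i : Fin k, ∑ j : Fin k, if i < j then 1 else 0) = k * (k - 1) / 2 := by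
  have h : ∀ i : Fin k, (∑ j : Fin k, if i < j then 1 else 0) = k - 1 - (i : ℕ) := by
    intro i
    rw [← Finset.card_filter]
    have : (Finset.univ.filter (fun j : Fin k => i < j)) = Finset.Ioi i := by
      ext j; simp
    rw [this, Fin.card_Ioi]
  rw [Finset.sum_congr rfl (fun i _ => h i), Fin.sum_univ_eq_sum_range (fun i => k - 1 - i) k,
    Finset.sum_range_reflect (fun i => i) k, Finset.sum_range_id]

theorem mc_path_len {α : Type*} {R : α → α → Prop} {a b : α} {p : List α}
    (h : IsDiPath R a b p) (hl : p.length - 1 = 0) : a = b := by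
  obtain ⟨h1, h2, -, -⟩ := h
  match p, h1, h2, hl with
  | [x], h1, h2, _ => simp_all

theorem mc_path_edge {α : Type*} {R : α → α → Prop} {a b : α} {p : List α}
    (h : IsDiPath R a b p) (hl : p.length - 1 = 1) : R a b := by
  obtain ⟨h1, h2, h3, -⟩ := h
  match p, h1, h2, h3, hl with
  | [x, y], h1, h2, h3, _ => 
    simp at h1 h2 
    subst h1 h2
    cases h3 with
    | cons_cons h _ => exact h

/-- Correctness of the Multicolored Clique reduction: `G` (with parts given by `col`, no edge
inside a part) has a multicolored clique iff the constructed VMP instance admits a valid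
mapping of cost at most `k′ = ∑_{i=1}^{k} (i+1)² + k(k-1)/2`. -/
theorem multicoloredClique_iff_validMapping {W : Type*} [Fintype W] [DecidableEq W]
    (k : ℕ) (hk : 1 ≤ k) (E : W → W → Prop) (hsymm : Symmetric E) (col : W → Fin k)
    (hpart : ∀ x y, E x y → col x ≠ col y) :
    (∃ f : Fin k → W, (∀ i, col (f i) = i) ∧ ∀ i j, i ≠ j → E (f i) (f j)) ↔
      (∃ M : MCMapping W k, M.Valid E col ∧
        M.cost col ≤ (∑ i : Fin k, ((i : ℕ) + 2) ^ 2) + k * (k - 1) / 2) := by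
  constructor
  · rintro ⟨f, hf, hE⟩
    refine ⟨⟨f, fun i j => [f i, f j]⟩, ⟨fun i => by simp [hf], ?_⟩, ?_⟩
    · intro i j hij
      refine ⟨rfl, rfl, ?_, ?_⟩
      · exact .cons_cons ⟨hE i j hij.ne, by simpa [hf] using hij⟩ (.singleton _)
      · have : f i ≠ f j := fun h => hij.ne (by rw [← hf i, ← hf j, h])
        simpa using this
    · unfold MCMapping.cost
      simp only [hf, List.length_cons, List.length_nil]
      rw [← mc_pair_count k]
      apply le_of_eq
      congr 1
      exact Finset.sum_congr rfl fun i _ => by ring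
  · rintro ⟨M, ⟨hV, hP⟩, hc⟩
    rw [← mc_pair_count k, MCMapping.cost] at hc
    have key : ∀ i j : Fin k, (if i < j then 1 else 0) ≤
        (if i < j then (M.mE i j).length - 1 else 0) +
          (if j ∈ Finset.Ioc i (col (M.mV i)) then 1 else 0) := by
      intro i j
      by_cases hij : i < j
      · by_cases hl : (M.mE i j).length - 1 = 0
        · have he := mc_path_len (hP i j hij) hl
          have := hV j
          rw [← he] at this
          have h2 : j ∈ Finset.Ioc i (col (M.mV i)) := Finset.mem_Ioc.2 ⟨hij, this⟩
          simp [h2, hij]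
        · simp only [hij, if_true]; omega
      · simp [hij]
    have key2 : ∀ i : Fin k, (∑ j : Fin k, if i < j then 1 else 0) ≤
        (∑ j : Fin k, if i < j then (M.mE i j).length - 1 else 0) +
          ((col (M.mV i) : ℕ) - i) := by
      intro i
      have := Finset.sum_le_sum (fun j (_ : j ∈ Finset.univ) => key i j)
      rw [Finset.sum_add_distrib] at this
      refine this.trans (le_of_eq ?_)
      congr 1
      rw [← Finset.card_filter, Finset.filter_mem_eq_inter, Finset.univ_inter, Fin.card_Ioc]
    have key3 : ∀ i : Fin k, ((i : ℕ) + 2) ^ 2 + (∑ j : Fin k, if i < j then 1 else 0) +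
        ((col (M.mV i) : ℕ) - i) ≤ ((i : ℕ) + 2) * ((col (M.mV i) : ℕ) + 2) +
        ∑ j : Fin k, if i < j then (M.mE i j).length - 1 else 0 := by
      intro i
      have h1 := key2 i
      obtain ⟨d, hd⟩ := Nat.exists_eq_add_of_le (hV i)
      rw [hd, Nat.add_sub_cancel_left] at h1 ⊢
      nlinarith [Nat.zero_le ((i : ℕ) * d)]
    have key4 := Finset.sum_le_sum (fun i (_ : i ∈ Finset.univ) => key3 i)
    simp only [Finset.sum_add_distrib] at key4
    have hz : ∑ i : Fin k, ((col (M.mV i) : ℕ) - i) = 0 := by omega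
    have hcol : ∀ i, col (M.mV i) = i := by
      intro i
      have h1 := (Finset.sum_eq_zero_iff.1 hz) i (Finset.mem_univ _)
      have h2 := hV i
      apply Fin.ext
      omega
    have hpt : ∀ i j : Fin k, (if i < j then 1 else 0) ≤
        (if i < j then (M.mE i j).length - 1 else 0) := by
      intro i j
      have := key i j
      simpa [hcol i] using this
    have hle : (∑ i : Fin k, ∑ j : Fin k, if i < j then (M.mE i j).length - 1 else 0) ≤
        ∑ i : Fin k, ∑ j : Fin k, if i < j then 1 else 0 := by
      have h0 : ∑ i : Fin k, ((i : ℕ) + 2) * ((col (M.mV i) : ℕ) + 2) =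
          ∑ i : Fin k, ((i : ℕ) + 2) ^ 2 :=
        Finset.sum_congr rfl fun i _ => by rw [hcol i]; ring
      omega
    have heq := le_antisymm
      (Finset.sum_le_sum fun i (_ : i ∈ Finset.univ) =>
        Finset.sum_le_sum fun j (_ : j ∈ Finset.univ) => hpt i j) hle
    have heq1 := (Finset.sum_eq_sum_iff_of_le (fun i (_ : i ∈ Finset.univ) =>
        Finset.sum_le_sum fun j (_ : j ∈ Finset.univ) => hpt i j)).1 heq
    have hedge : ∀ i j : Fin k, i < j → E (M.mV i) (M.mV j) := by
      intro i j hij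
      have h1 := (Finset.sum_eq_sum_iff_of_le (fun j (_ : j ∈ Finset.univ) => hpt i j)).1
        (heq1 i (Finset.mem_univ _)) j (Finset.mem_univ _)
      simp only [hij, if_true] at h1
      exact (mc_path_edge (hP i j hij) h1.symm).1
    refine ⟨M.mV, hcol, fun i j hij => ?_⟩
    rcases lt_or_gt_of_ne hij with h | h
    · exact hedge i j h
    · exact hsymm (hedge j i h)
end

section
/- Let k ≥ 1 and let G be a finite undirected graph whose vertex set is partitioned into parts V_1, …, V_k such that no edge of G joins two vertices of the same part, and consider the substrate, request, and bound k′ := Σ_{i=1}^{k} (i+1)² + k(k−1)/2 constructed from (G, k) as in the Multicolored Clique reduction. Then every valid mapping of the request into the substrate has cost at least k′; more precisely, if for each i, x_i denotes the number of request edges leaving v_i that are mapped onto paths of length zero, then the cost of the mapping is at least Σ_{i=1}^{k} (i+1)² + k(k−1)/2 + Σ_{i=1}^{k} i·x_i. -/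
open scoped BigOperators

theorem mc_count {k : ℕ} : ∑ i : Fin k, (Finset.univ.filter (fun j : Fin k => i < j)).card
    = k * (k - 1) / 2 := by
  have h : ∀ i : Fin k, (Finset.univ.filter (fun j : Fin k => i < j)).card = k - 1 - (i : ℕ) := by
    intro i
    rw [← Fin.card_Ioi i]
    congr 1
    ext j
    simp
  simp_rw [h]
  rw [Fin.sum_univ_eq_sum_range (fun i => k - 1 - i) k, Finset.sum_range_reflect (fun i => i) k,
    Finset.sum_range_id]

theorem mc_node {W : Type*} {k : ℕ} (E : W → W → Prop) (col : W → Fin k)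
    (M : MCMapping W k) (hM : M.Valid E col) (i : Fin k) :
    (i : ℕ) + (Finset.univ.filter (fun j : Fin k => i < j ∧ (M.mE i j).length = 1)).card
      ≤ (col (M.mV i) : ℕ) := by
  have hsub : Finset.univ.filter (fun j : Fin k => i < j ∧ (M.mE i j).length = 1)
      ⊆ Finset.Ioc i (col (M.mV i)) := by
    intro j hj
    simp only [Finset.mem_filter, Finset.mem_univ, true_and] at hj
    obtain ⟨hij, hl⟩ := hj
    obtain ⟨h1, h2, -, -⟩ := hM.2 i j hij
    obtain ⟨a, ha⟩ := List.length_eq_one_iff.1 hl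
    rw [ha] at h1 h2
    simp at h1 h2
    have h3 := hM.1 j
    rw [← h2, h1] at h3
    exact Finset.mem_Ioc.2 ⟨hij, h3⟩
  have := Finset.card_le_card hsub
  rw [Fin.card_Ioc] at this
  have := hM.1 i
  omega

theorem mc_edge {W : Type*} {k : ℕ} (E : W → W → Prop) (col : W → Fin k)
    (M : MCMapping W k) (hM : M.Valid E col) (i : Fin k) :
    (Finset.univ.filter (fun j : Fin k => i < j)).card ≤
    (Finset.univ.filter (fun j : Fin k => i < j ∧ (M.mE i j).length = 1)).card
      + ∑ j : Fin k, if i < j then (M.mE i j).length - 1 else 0 := by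
  rw [Finset.card_filter, Finset.card_filter, ← Finset.sum_add_distrib]
  apply Finset.sum_le_sum
  intro j _
  by_cases hij : i < j
  · have h1 := (hM.2 i j hij).1
    have : (M.mE i j).length ≠ 0 := by
      intro h
      rw [List.length_eq_zero_iff.1 h] at h1
      simp at h1
    simp only [hij, true_and, if_true]
    split_ifs <;> omega
  · simp [hij]

/-- Cost lower bound in the Multicolored Clique reduction: every valid mapping has cost at
least `k′ = ∑_{i=1}^{k} (i+1)² + k(k-1)/2`; more precisely, with `x_i` the number of request
edges leaving `v_i` that are mapped onto paths of length zero, the cost is at least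
`k′ + ∑_{i=1}^{k} i · x_i`. -/
theorem validMapping_cost_lower_bound {W : Type*} [Fintype W] [DecidableEq W]
    (k : ℕ) (hk : 1 ≤ k) (E : W → W → Prop) (hsymm : Symmetric E) (col : W → Fin k)
    (hpart : ∀ x y, E x y → col x ≠ col y)
    (M : MCMapping W k) (hM : M.Valid E col) :
    ((∑ i : Fin k, ((i : ℕ) + 2) ^ 2) + k * (k - 1) / 2 ≤ M.cost col) ∧
    ((∑ i : Fin k, ((i : ℕ) + 2) ^ 2) + k * (k - 1) / 2 +
        (∑ i : Fin k, ((i : ℕ) + 1) *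
          (Finset.univ.filter (fun j : Fin k => i < j ∧ (M.mE i j).length = 1)).card)
      ≤ M.cost col) := by
  have key : (∑ i : Fin k, ((i : ℕ) + 2) ^ 2) + k * (k - 1) / 2 +
        (∑ i : Fin k, ((i : ℕ) + 1) *
          (Finset.univ.filter (fun j : Fin k => i < j ∧ (M.mE i j).length = 1)).card)
      ≤ M.cost col := by
    unfold MCMapping.cost
    rw [← mc_count, ← Finset.sum_add_distrib, ← Finset.sum_add_distrib, ← Finset.sum_add_distrib]
    apply Finset.sum_le_sum
    intro i _
    have h1 := mc_node E col M hM i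
    have h2 := mc_edge E col M hM i
    have h3 := Nat.mul_le_mul_left ((i : ℕ) + 2) h1
    nlinarith
  exact ⟨le_trans (Nat.le_add_right _ _) key, key⟩
end
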